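/- Let k > 470, n ≥ k+1, and suppose L_n^{(k)} = a·(10^{d1}−1)/9 + (b−a)·10^{d2} with integers 0 ≤ d2 < d1, d1 ≥ 3, 1 ≤ a ≤ 9 and 0 ≤ b ≤ 9. Then k < 3·10^{31} and n < 1.8·10^{291}. -/

import Mathlib

/-- Shifted `k`-generalized Lucas sequence: `genLucas k m` equals `L^{(k)}_{m - (k-2)}`,
so that index `m = 0` corresponds to `n = 2 - k`.  The initial values are
`L^{(k)}_{2-k} = ⋯ = L^{(k)}_{-1} = 0`, `L^{(k)}_0 = 2`, `L^{(k)}_1 = 1`, and each term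
afterwards is the sum of the `k` preceding terms. -/
def genLucas (k : ℕ) : ℕ → ℤ := fun m =>
  if h1 : m < k - 2 then 0
  else if h2 : m = k - 2 then 2
  else if h3 : m = k - 1 then 1
  else ∑ i ∈ Finset.range k, genLucas k (m - 1 - i)
decreasing_by omega

/-- The `k`-generalized Lucas number `L^{(k)}_n` for `n ≥ 0`. -/
def lucasL (k n : ℕ) : ℤ := genLucas k (n + k - 2)

/-!
With `w = ⌊log₂ n⌋ + 1`, the cases `k ≤ 200 w` and `k ≥ 200 w` are excluded for different reasons
once `n ≥ 2 ^ 967`; the second argument needs no such lower bound and so also bounds `k`.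

If `k ≤ 200 w`, the dominant root `α` of the recurrence gives `9 L_n = C(α) α ^ (n - 1) + O(1)`.
Comparing with the leading digits produces a small linear form `Λ` in `log α`, `log 10` and the
logarithm of an algebraic number: first with the leading block `a ⋯ a`, which must therefore be
short, and then with that block as part of the algebraic number, which is contradictory. Lower
bounds for two logarithms suffice: Dirichlet approximation and division of `n - 1` by `p` turn `Λ`
into `l₂ - N l₁` with `l₁ = p log α - q log 10`, where `exp l₁` and `exp l₂` have moderate height.
If this were tiny, the values of suitable monomials would be almost those of exponential polynomials
in `exp l₁`, and a Laurent interpolation determinant would be too small for Liouville's inequality,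
although a zero estimate shows that it does not vanish.

If `k ≥ 200 w`, write `n = (k + 1) t + r` with `r ≤ k`. Then
`4 L_n = ± ∑ j, (-1) ^ j 2 ^ (r + j (k + 1)) c_j` exactly, with positive integers `c_j`. Since `256`
does not divide `L_n`, `r ≤ 9`; the term `P` with `j = 0` is then so small that it accounts for all
the low digits, which leaves `9 (4 L_n - P) = 4 a 10 ^ d₁`. The left side has `2`-adic valuation
close to `k` because that of `c_1` is `O(w)`, hence `d₁` is close to `k`, while the size of `L_n`
forces `d₁` to be close to `n log₁₀ 2 > 1.2 k`.
-/

open Finset Polynomial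

section ZeroEstimate

variable {R ι τ : Type*} [CommRing R]

theorem coeff_prod_sum_of_natDegree_le (s : Finset ι) (f : ι → R[X]) (d : ι → ℕ)
    (h : ∀ i ∈ s, (f i).natDegree ≤ d i) :
    (∏ i ∈ s, f i).coeff (∑ i ∈ s, d i) = ∏ i ∈ s, (f i).coeff (d i) := by
  classical
  induction s using Finset.induction_on with
  | empty => simp
  | insert i s hi ih =>
    have hs : (∏ j ∈ s, f j).natDegree ≤ ∑ j ∈ s, d j :=
      (natDegree_prod_le s f).trans
        (Finset.sum_le_sum fun j hj ↦ h j (Finset.mem_insert_of_mem hj))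
    rw [prod_insert hi, sum_insert hi, prod_insert hi,
      coeff_mul_add_eq_of_natDegree_le (h i (mem_insert_self i s)) hs,
      ih fun j hj ↦ h j (mem_insert_of_mem hj)]

variable [Fintype ι]

theorem natDegree_det_le_sum [DecidableEq ι] {M : Matrix ι ι R[X]} {d : ι → ℕ}
    (h : ∀ i j, (M i j).natDegree ≤ d j) : M.det.natDegree ≤ ∑ j, d j := by
  rw [Matrix.det_apply]
  refine natDegree_sum_le_of_forall_le _ _ fun σ _ ↦ (natDegree_smul_le _ _).trans ?_
  exact (natDegree_prod_le _ _).trans (Finset.sum_le_sum fun j _ ↦ h _ j)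

theorem coeff_det_sum_of_natDegree_le [DecidableEq ι] {M : Matrix ι ι R[X]} {d : ι → ℕ}
    (h : ∀ i j, (M i j).natDegree ≤ d j) :
    M.det.coeff (∑ j, d j) = (Matrix.of fun i j ↦ (M i j).coeff (d j)).det := by
  simp_rw [Matrix.det_apply, finsetSum_coeff, coeff_smul,
    coeff_prod_sum_of_natDegree_le _ _ d fun j _ ↦ h _ j, Matrix.of_apply]

theorem natDegree_taylor_mul_C_le (p : R[X]) (a b : R) :
    (taylor a p * C b).natDegree ≤ p.natDegree :=
  (natDegree_mul_C_le _ _).trans (natDegree_taylor p a).le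

variable [IsDomain R]

theorem det_taylor_mul_C_pow_ne_zero {l : ℕ} {P : Fin l → R[X]} (hP : ∀ b, P b ≠ 0)
    {c : Fin l → R} (hc : Function.Injective c) :
    (Matrix.of fun a b : Fin l ↦ taylor (a : R) (P b) * C (c b ^ (a : ℕ))).det ≠ 0 := by
  have hlead : (Matrix.of fun a b : Fin l ↦
      (taylor (a : R) (P b) * C (c b ^ (a : ℕ))).coeff (P b).natDegree).det =
      (∏ b, (P b).leadingCoeff) * (Matrix.vandermonde c).det := by
    rw [← Matrix.det_transpose (Matrix.vandermonde c), ← Matrix.det_mul_row]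
    congr 1
    ext a b
    simp only [Matrix.of_apply, coeff_mul_C, coeff_taylor_natDegree, Matrix.transpose_apply,
      Matrix.vandermonde_apply]
  intro hzero
  have hcoeff := coeff_det_sum_of_natDegree_le (M := Matrix.of fun a b : Fin l ↦
    taylor (a : R) (P b) * C (c b ^ (a : ℕ))) fun a b ↦ natDegree_taylor_mul_C_le (P b) _ _
  rw [hzero, coeff_zero] at hcoeff
  have hne : (∏ b, (P b).leadingCoeff) * (Matrix.vandermonde c).det ≠ 0 :=
    mul_ne_zero (prod_ne_zero_iff.2 fun b _ ↦ leadingCoeff_ne_zero.2 (hP b))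
      (Matrix.det_vandermonde_ne_zero_iff.2 hc)
  rw [← hlead] at hne
  exact hne hcoeff.symm

theorem card_le_sum_natDegree_of_sum_eval_add_eq_zero [Fintype τ] {l : ℕ} {P : Fin l → R[X]}
    (hP : ∀ b, P b ≠ 0) {c : Fin l → R} (hc : Function.Injective c) {z : τ → R}
    (hz : Function.Injective z) {w : τ → Fin l → R} (hw : ∀ t, w t ≠ 0)
    (hvan : ∀ t, ∀ a < l, ∑ b, (P b).eval (z t + a) * (c b ^ a * w t b) = 0) :
    Fintype.card τ ≤ ∑ b, (P b).natDegree := by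
  set M : Matrix (Fin l) (Fin l) R[X] :=
    Matrix.of fun a b ↦ taylor (a : R) (P b) * C (c b ^ (a : ℕ)) with hM
  by_contra! hlt
  refine det_taylor_mul_C_pow_ne_zero hP hc
    (eq_zero_of_natDegree_lt_card_of_eval_eq_zero M.det hz (fun t ↦ ?_)
      ((natDegree_det_le_sum fun a b ↦ natDegree_taylor_mul_C_le (P b) _ _).trans_lt hlt))
  rw [← coe_evalRingHom, RingHom.map_det, ← Matrix.exists_mulVec_eq_zero_iff]
  refine ⟨w t, hw t, funext fun a ↦ ?_⟩
  rw [Pi.zero_apply, ← hvan t a a.2]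
  simp [Matrix.mulVec, dotProduct, hM, taylor_eval, mul_assoc]

theorem eq_zero_of_sum_eval_add_eq_zero [Fintype τ] {κ : ℕ} {P : ι → R[X]}
    (hdeg : ∀ j, (P j).degree < κ) {c : ι → R} (hc : Function.Injective c) {z : τ → R}
    (hz : Function.Injective z) {w : τ → ι → R} (hw : ∀ t j, w t j ≠ 0)
    (hcard : κ * Fintype.card ι ≤ Fintype.card τ)
    (hvan : ∀ t, ∀ a < Fintype.card ι, ∑ j, (P j).eval (z t + a) * (c j ^ a * w t j) = 0) :
    P = 0 := by
  classical
  by_contra hP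
  obtain ⟨j₀, hj₀⟩ := Function.ne_iff.1 hP
  let l := Fintype.card {j // P j ≠ 0}
  let e : Fin l ≃ {j // P j ≠ 0} := (Fintype.equivFin _).symm
  have hl : l ≤ Fintype.card ι := Fintype.card_subtype_le _
  have hl₀ : 0 < l := Fintype.card_pos_iff.2 ⟨⟨j₀, hj₀⟩⟩
  have hκ (j) (hj : P j ≠ 0) : (P j).natDegree < κ := (natDegree_lt_iff_degree_lt hj).2 (hdeg j)
  have hle : Fintype.card τ ≤ ∑ b, (P (e b)).natDegree := by
    refine card_le_sum_natDegree_of_sum_eval_add_eq_zero (c := fun b ↦ c (e b))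
      (w := fun t b ↦ w t (e b)) (fun b ↦ (e b).2)
      (hc.comp (Subtype.val_injective.comp e.injective)) hz
      (fun t ht ↦ hw t _ (congrFun ht ⟨0, hl₀⟩)) fun t a ha ↦ ?_
    let g (j : ι) : R := (P j).eval (z t + a) * (c j ^ a * w t j)
    calc ∑ b, g (e b) = ∑ j : {j // P j ≠ 0}, g j := e.sum_comp fun j ↦ g j
      _ = ∑ j with P j ≠ 0, g j := (Finset.sum_subtype _ (by simp) g).symm
      _ = ∑ j, g j := sum_filter_of_ne fun j _ hj hPj ↦ hj (by simp [g, hPj])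
      _ = 0 := hvan t a (ha.trans_le hl)
  have hsum : ∑ b, (P (e b)).natDegree < κ * Fintype.card ι :=
    calc ∑ b, (P (e b)).natDegree < ∑ _b : Fin l, κ :=
          Finset.sum_lt_sum_of_nonempty ⟨⟨0, hl₀⟩, mem_univ _⟩ fun b _ ↦ hκ _ (e b).2
      _ = κ * l := by simp [mul_comm]
      _ ≤ κ * Fintype.card ι := by gcongr
  omega

end ZeroEstimate

theorem exists_submatrix_det_ne_zero {F ι κ : Type*} [Field F] [Finite ι] [Fintype κ]
    [DecidableEq κ] (A : Matrix ι κ F) (hA : Function.Injective A.mulVec) :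
    ∃ f : κ → ι, (A.submatrix f id).det ≠ 0 := by
  have hrank : A.rank = Fintype.card κ := by
    rw [Matrix.rank, LinearMap.finrank_range_of_inj hA, Module.finrank_fintype_fun_eq_card]
  have hspan : Submodule.span F (Set.range A.row) = ⊤ := by
    refine Submodule.eq_top_of_finrank_eq ?_
    rw [← Matrix.rank_eq_finrank_span_row, hrank, Module.finrank_fintype_fun_eq_card]
  obtain ⟨s, g, -, hg, hli⟩ := exists_linearIndependent' F A.row
  let b : Module.Basis s F (κ → F) := Module.Basis.mk hli (hg.trans hspan).ge
  let e : κ ≃ s := (Pi.basisFun F κ).indexEquiv b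
  have hunit := Matrix.linearIndependent_rows_iff_isUnit (A := A.submatrix (g ∘ e) id).1
    (hli.comp e e.injective)
  exact ⟨g ∘ e, ((Matrix.isUnit_iff_isUnit_det _).1 hunit).ne_zero⟩

section DeterminantBounds

variable {ι : Type*} [Fintype ι]

theorem sum_range_card_le_sum_of_injOn {f : ι → ℕ}
    (hf : Set.InjOn f {i | f i < Fintype.card ι}) :
    ∑ n ∈ range (Fintype.card ι), n ≤ ∑ i, f i := by
  have many_large : ∀ n ∈ range (Fintype.card ι), Fintype.card ι - 1 - n ≤ #{i | n < f i} := by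
    intro n hn
    have few_small : #{i | ¬ n < f i} ≤ #(range (n + 1)) :=
      card_le_card_of_injOn f (fun i hi => by simp at hi ⊢; omega) fun i hi j hj hij =>
        hf (by simp at hi hn ⊢; omega) (by simp at hj hn ⊢; omega) hij
    have hsplit := card_filter_add_card_filter_not (s := (univ : Finset ι)) (n < f ·)
    rw [card_range] at few_small
    rw [card_univ] at hsplit
    omega
  calc ∑ n ∈ range (Fintype.card ι), n
      = ∑ n ∈ range (Fintype.card ι), (Fintype.card ι - 1 - n) := (sum_range_reflect id _).symm
    _ ≤ ∑ n ∈ range (Fintype.card ι), #{i | n < f i} := sum_le_sum many_large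
    _ = ∑ i, #{n ∈ range (Fintype.card ι) | n < f i} :=
      sum_card_bipartiteAbove_eq_sum_card_bipartiteBelow _
    _ ≤ ∑ i, f i := sum_le_sum fun i _ =>
      (card_le_card fun n hn => mem_range.2 (mem_filter.1 hn).2).trans_eq (card_range (f i))

variable [DecidableEq ι]

theorem det_eq_zero_of_rows_proportional {R : Type*} [CommRing R] {M : Matrix ι ι R} {i j : ι}
    (hij : i ≠ j) {a b : R} {v : ι → R} (hi : M i = a • v) (hj : M j = b • v) : M.det = 0 := by
  have hM : M = ((M.updateRow j v).updateRow i (a • v)).updateRow j (b • v) := by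
    ext p q
    rcases eq_or_ne p j with rfl | hpj
    · simp [hj]
    rcases eq_or_ne p i with rfl | hpi
    · simp [hi, hij]
    · simp [hpj, hpi]
  rw [hM, Matrix.det_updateRow_smul, Matrix.updateRow_comm _ hij, Matrix.det_updateRow_smul,
    Matrix.det_zero_of_row_eq hij, mul_zero, mul_zero]
  ext
  simp [hij.symm]

theorem abs_det_le_of_row_weights {M : Matrix ι ι ℝ} {F : ℝ} {w : ι → ℝ}
    (h : ∀ i j, |M i j| ≤ F * w i) :
    |M.det| ≤ (Fintype.card ι).factorial * F ^ Fintype.card ι * ∏ i, w i := by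
  calc |M.det| ≤ ∑ σ : Equiv.Perm ι, |∏ i, M (σ i) i| := by
        rw [Matrix.det_apply]
        refine (abs_sum_le_sum_abs _ _).trans_eq (sum_congr rfl fun σ _ => ?_)
        rcases Int.units_eq_one_or (Equiv.Perm.sign σ) with h | h <;> simp [h]
    _ ≤ ∑ _ : Equiv.Perm ι, F ^ Fintype.card ι * ∏ i, w i := by
        refine sum_le_sum fun σ _ => ?_
        rw [abs_prod, ← Equiv.prod_comp σ w, ← card_univ, ← prod_const, ← prod_mul_distrib]
        exact prod_le_prod (fun _ _ => abs_nonneg _) fun i _ => h _ _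
    _ = _ := by simp [Fintype.card_perm, mul_assoc]

/- Expand every column into the `T = card ι` approximating monomials and one error term. In a
nonzero term of the multilinear expansion no monomial occurs twice, so the decay exponents of
its factors add up to at least `0 + 1 + ⋯ + (T - 1)`. -/
theorem abs_det_le_of_approx_by_monomials {A : Matrix ι ι ℝ} {F ρ : ℝ} (hF : 0 ≤ F)
    (hρ : 1 ≤ ρ) {u : ι → ℝ} (hu : ∀ r, |u r| ≤ 1) {c : ι → ℕ → ℝ}
    (hc : ∀ j n, |c j n| ≤ F * (ρ ^ n)⁻¹)
    (hA : ∀ r j, |A r j - ∑ n ∈ range (Fintype.card ι), c j n * u r ^ n| ≤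
      F * (ρ ^ Fintype.card ι)⁻¹) :
    |A.det| ≤ (Fintype.card ι + 1 : ℝ) ^ Fintype.card ι * ((Fintype.card ι).factorial *
      F ^ Fintype.card ι * (ρ ^ ∑ n ∈ range (Fintype.card ι), n)⁻¹) := by
  set T := Fintype.card ι with hT
  let part (j : ι) (m : Fin (T + 1)) (r : ι) : ℝ :=
    if (m : ℕ) < T then c j m * u r ^ (m : ℕ) else A r j - ∑ n ∈ range T, c j n * u r ^ n
  have hpart : ∀ j m r, |part j m r| ≤ F * (ρ ^ (m : ℕ))⁻¹ := by
    intro j m r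
    simp only [part]
    split_ifs with hm
    · rw [abs_mul, abs_pow]
      exact (mul_le_of_le_one_right (abs_nonneg _) (pow_le_one₀ (abs_nonneg _) (hu r))).trans
        (hc j m)
    · rw [show (m : ℕ) = T by omega]
      exact hA r j
  have hsum : A.transpose = Matrix.of fun j => ∑ m, part j m := by
    ext j r
    simp [Fin.sum_univ_castSucc, part, sum_range (fun n => c j n * u r ^ n)]
  have hexpand : A.det = ∑ f : ι → Fin (T + 1), (Matrix.of fun j => part j (f j)).det := by
    rw [← Matrix.det_transpose, hsum]
    exact Matrix.detRowAlternating.toMultilinearMap.map_sum part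
  have hterm : ∀ f : ι → Fin (T + 1), |(Matrix.of fun j => part j (f j)).det| ≤
      T.factorial * F ^ T * (ρ ^ ∑ n ∈ range T, n)⁻¹ := by
    intro f
    by_cases hf : Set.InjOn (fun j => (f j : ℕ)) {j | (f j : ℕ) < T}
    · refine (abs_det_le_of_row_weights fun j r => hpart j (f j) r).trans ?_
      rw [prod_inv_distrib, prod_pow_eq_pow_sum]
      gcongr
      exact sum_range_card_le_sum_of_injOn hf
    · simp only [Set.InjOn, not_forall] at hf
      obtain ⟨i, hi, j, _, hij, hne⟩ := hf
      rw [det_eq_zero_of_rows_proportional (v := fun r => u r ^ (f i : ℕ)) hne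
        (a := c i (f i)) (b := c j (f i)), abs_zero]
      · positivity
      · ext r; simp [part, show (f i : ℕ) < T from hi]
      · ext r; simp [part, ← Fin.ext hij, show (f i : ℕ) < T from hi]
  rw [hexpand]
  exact (abs_sum_le_sum_abs _ _).trans ((sum_le_sum fun f _ => hterm f).trans_eq (by simp [hT]))

end DeterminantBounds

section Liouville

variable {K : Type*} [Field K] [NumberField K] {n : Type*} [Fintype n] [DecidableEq n]

open NumberField in
theorem house_le_iff {x : K} {r : ℝ} : house x ≤ r ↔ ∀ σ : K →+* ℂ, ‖σ x‖ ≤ r :=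
  canonicalEmbedding.norm_le_iff x r

open NumberField in
theorem house_det_le {B : Matrix n n K} {E : ℝ} (hB : ∀ i j, house (B i j) ≤ E) :
    house B.det ≤ (Fintype.card n).factorial * E ^ Fintype.card n := by
  refine house_le_iff.2 fun σ => ?_
  rw [RingHom.map_det, ← nsmul_eq_mul]
  exact Matrix.det_le (A := σ.mapMatrix B) (abv := NormedField.toAbsoluteValue ℂ)
    fun i j => (norm_embedding_le_house _ σ).trans (hB i j)

open NumberField in
theorem abs_le_house (φ : K →+* ℝ) (x : K) : |φ x| ≤ house x := by
  simpa using norm_embedding_le_house x (Complex.ofRealHom.comp φ)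

open NumberField in
theorem one_le_abs_mul_house_pow (φ : K →+* ℝ) {x : K} (hx : IsIntegral ℤ x) (hx0 : x ≠ 0) :
    1 ≤ |φ x| * house x ^ (Module.finrank ℚ K - 1) := by
  obtain ⟨m, hm⟩ := IsIntegrallyClosed.isIntegral_iff.1 (Algebra.isIntegral_norm ℚ hx)
  have hm0 : m ≠ 0 := by
    rintro rfl
    exact Algebra.norm_ne_zero_iff.2 hx0 (by rw [← hm, map_zero])
  calc (1 : ℝ) ≤ |(m : ℝ)| := by exact_mod_cast Int.one_le_abs hm0
    _ = ‖Algebra.norm ℚ x‖ := by rw [← hm]; simp [Int.norm_eq_abs]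
    _ ≤ _ := by simpa using norm_norm_le_norm_mul_house_pow x (Complex.ofRealHom.comp φ)

open NumberField in
theorem one_le_abs_det_mul_of_row_denominators (φ : K →+* ℝ) {A : Matrix n n ℝ}
    {B : Matrix n n K} {d : n → K} (hAB : ∀ i j, φ (B i j) = φ (d i) * A i j)
    (hA : A.det ≠ 0) (hd : ∀ i, d i ≠ 0) (hint : ∀ i j, IsIntegral ℤ (B i j)) {E : ℝ}
    (hE : 1 ≤ E) (hBE : ∀ i j, house (B i j) ≤ E) (hdE : ∀ i, house (d i) ≤ E) :
    1 ≤ |A.det| * ((Fintype.card n).factorial * E ^ Fintype.card n) ^ Module.finrank ℚ K := by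
  set W : ℝ := (Fintype.card n).factorial * E ^ Fintype.card n
  have hprod : φ B.det = (∏ i, φ (d i)) * A.det := by
    rw [RingHom.map_det, ← Matrix.det_mul_column]
    exact congrArg Matrix.det (Matrix.ext hAB)
  have hden : |∏ i, φ (d i)| ≤ W := by
    rw [abs_prod]
    refine le_trans ?_ (le_mul_of_one_le_left (b := E ^ Fintype.card n)
      (pow_nonneg (zero_le_one.trans hE) _)
      (by exact_mod_cast Nat.factorial_pos (Fintype.card n)))
    calc ∏ i, |φ (d i)| ≤ ∏ _i : n, E :=
          prod_le_prod (fun _ _ => abs_nonneg _) fun i _ => (abs_le_house φ _).trans (hdE i)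
      _ = E ^ Fintype.card n := by simp
  have hdet : B.det ≠ 0 := by
    refine (map_ne_zero φ).1 (hprod ▸ mul_ne_zero (prod_ne_zero_iff.2 fun i _ => ?_) hA)
    exact (map_ne_zero φ).2 (hd i)
  calc 1 ≤ |φ B.det| * house B.det ^ (Module.finrank ℚ K - 1) :=
        one_le_abs_mul_house_pow φ (IsIntegral.det hint) hdet
    _ ≤ (W * |A.det|) * W ^ (Module.finrank ℚ K - 1) := by
        have := house_nonneg B.det
        rw [hprod, abs_mul]
        gcongr
        exact house_det_le hBE
    _ = |A.det| * (W * W ^ (Module.finrank ℚ K - 1)) := by ring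
    _ = |A.det| * W ^ Module.finrank ℚ K := by
        rw [mul_pow_sub_one Module.finrank_pos.ne']

end Liouville

section ExpApproximation

theorem abs_exp_sub_taylor_le {ρ : ℝ} (hρ : 1 ≤ ρ) (x : ℝ) (M : ℕ) :
    |Real.exp x - ∑ m ∈ range M, x ^ m / m.factorial| ≤ Real.exp (ρ * |x|) * (ρ ^ M)⁻¹ := by
  have hasSum_exp : ∀ y : ℝ, HasSum (fun m : ℕ => y ^ m / m.factorial) (Real.exp y) := fun y => by
    rw [Real.exp_eq_exp_ℝ]
    exact NormedSpace.expSeries_div_hasSum_exp y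
  have htail := (hasSum_nat_add_iff' M).2 (hasSum_exp x)
  have hmajor := ((hasSum_nat_add_iff' M).2 (hasSum_exp (ρ * |x|))).mul_right (ρ ^ M)⁻¹
  have hterm : ∀ m : ℕ, ‖x ^ (m + M) / (m + M).factorial‖ ≤
      (ρ * |x|) ^ (m + M) / (m + M).factorial * (ρ ^ M)⁻¹ := by
    intro m
    calc ‖x ^ (m + M) / (m + M).factorial‖ = |x| ^ (m + M) / (m + M).factorial := by simp
      _ ≤ ρ ^ m * (|x| ^ (m + M) / (m + M).factorial) :=
        le_mul_of_one_le_left (by positivity) (one_le_pow₀ hρ)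
      _ = _ := by rw [mul_pow, pow_add ρ]; field_simp
  rw [← Real.norm_eq_abs, ← htail.tsum_eq]
  refine (tsum_of_norm_bounded hmajor hterm).trans ?_
  gcongr
  exact sub_le_self _ (sum_nonneg fun m _ => by positivity)

theorem exists_coeff_pow_mul_exp_approx {ρ : ℝ} (hρ : 1 ≤ ρ) (a : ℝ) {i T : ℕ} (hi : i ≤ T) :
    ∃ c : ℕ → ℝ, (∀ n, |c n| ≤ ρ ^ i * Real.exp (ρ * |a|) * (ρ ^ n)⁻¹) ∧
      ∀ u, |u| ≤ 1 → |u ^ i * Real.exp (a * u) - ∑ n ∈ range T, c n * u ^ n| ≤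
        ρ ^ i * Real.exp (ρ * |a|) * (ρ ^ T)⁻¹ := by
  refine ⟨fun n => if i ≤ n then a ^ (n - i) / (n - i).factorial else 0, fun n => ?_,
    fun u hu => ?_⟩
  · beta_reduce
    split_ifs with hn
    · obtain ⟨m, rfl⟩ := Nat.exists_eq_add_of_le hn
      have hm := Real.pow_div_factorial_le_exp (ρ * |a|) (by positivity) m
      rw [← div_eq_mul_inv, le_div_iff₀ (by positivity)]
      calc |a ^ (i + m - i) / (i + m - i).factorial| * ρ ^ (i + m)
          = ρ ^ i * ((ρ * |a|) ^ m / m.factorial) := by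
            rw [Nat.add_sub_cancel_left, abs_div, abs_pow, Nat.abs_cast]; ring
        _ ≤ _ := by gcongr
    · rw [abs_zero]; positivity
  · obtain ⟨M, rfl⟩ := Nat.exists_eq_add_of_le hi
    have hsum : ∑ n ∈ range (i + M),
        (if i ≤ n then a ^ (n - i) / (n - i).factorial else 0) * u ^ n =
        u ^ i * ∑ m ∈ range M, (a * u) ^ m / m.factorial := by
      rw [sum_range_add, sum_eq_zero fun n hn => by rw [if_neg (by simpa using hn), zero_mul],
        zero_add, mul_sum]
      refine sum_congr rfl fun m _ => ?_
      rw [if_pos (by omega), Nat.add_sub_cancel_left]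
      ring
    have hexp := abs_exp_sub_taylor_le hρ (a * u) M
    rw [hsum, ← mul_sub, abs_mul, abs_pow]
    calc |u| ^ i * |Real.exp (a * u) - ∑ m ∈ range M, (a * u) ^ m / m.factorial|
        ≤ 1 * (Real.exp (ρ * |a|) * (ρ ^ M)⁻¹) := by
          refine mul_le_mul (pow_le_one₀ (abs_nonneg u) hu) (hexp.trans ?_) (abs_nonneg _)
            zero_le_one
          rw [abs_mul]
          gcongr
          exact mul_le_of_le_one_right (abs_nonneg a) hu
      _ = _ := by rw [pow_add]; field_simp

theorem abs_exp_mul_sub_one_le {j L : ℕ} {δ ε : ℝ} (hj : j ≤ L) (hδ : 2 * (L * |δ|) ≤ ε)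
    (hε : ε ≤ 1) : |Real.exp (j * δ) - 1| ≤ ε := by
  have hsmall : 2 * |j * δ| ≤ ε := by
    refine le_trans ?_ hδ
    rw [abs_mul, Nat.abs_cast]
    gcongr
  exact (Real.abs_exp_sub_one_le (by linarith [abs_nonneg (j * δ)])).trans hsmall

variable {ρ X : ℝ} (hρ : 1 ≤ ρ) (hX : 1 ≤ X) (l : ℝ) {i j κ L T : ℕ}
include hρ hX

theorem abs_pow_mul_exp_le (hi : i ≤ κ) (hj : j ≤ L) {z : ℝ} (hz : |z| ≤ X) :
    |z ^ i * Real.exp (j * l * z)| ≤ (ρ * X) ^ κ * Real.exp (L * (ρ * (|l| * X))) := by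
  have hexp : j * l * z ≤ L * (ρ * (|l| * X)) := by
    calc j * l * z ≤ j * (|l| * |z|) := by
          rw [mul_assoc, ← abs_mul]; gcongr; exact le_abs_self _
      _ ≤ L * (|l| * X) := by gcongr
      _ ≤ L * (ρ * (|l| * X)) :=
          mul_le_mul_of_nonneg_left (le_mul_of_one_le_left (by positivity) hρ) L.cast_nonneg
  rw [abs_mul, abs_pow, Real.abs_exp]
  gcongr
  calc |z| ^ i ≤ (ρ * X) ^ i := by
        gcongr; exact hz.trans (le_mul_of_one_le_left (by positivity) hρ)
    _ ≤ _ := pow_le_pow_right₀ (one_le_mul_of_one_le_of_one_le hρ hX) hi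

theorem exists_coeff_exp_monomial_approx (hi : i ≤ κ) (hj : j ≤ L) (hκ : κ ≤ T) :
    ∃ c : ℕ → ℝ,
      (∀ n, |c n| ≤ 2 * ((ρ * X) ^ κ * Real.exp (L * (ρ * (|l| * X)))) * (ρ ^ n)⁻¹) ∧
      ∀ z δ, |z| ≤ X → 2 * (L * |δ|) ≤ (ρ ^ T)⁻¹ →
        |z ^ i * Real.exp (l * z + δ) ^ j - ∑ n ∈ range T, c n * (z / X) ^ n| ≤
          2 * ((ρ * X) ^ κ * Real.exp (L * (ρ * (|l| * X)))) * (ρ ^ T)⁻¹ := by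
  have hX0 : 0 < X := one_pos.trans_le hX
  obtain ⟨c, hc, happrox⟩ := exists_coeff_pow_mul_exp_approx hρ (j * l * X) (hi.trans hκ)
  set F := (ρ * X) ^ κ * Real.exp (L * (ρ * (|l| * X)))
  have hF : X ^ i * (ρ ^ i * Real.exp (ρ * |j * l * X|)) ≤ F := by
    rw [← mul_assoc, ← mul_pow, mul_comm X, abs_mul, abs_mul, Nat.abs_cast, abs_of_pos hX0,
      mul_assoc (j : ℝ), mul_left_comm ρ]
    refine mul_le_mul (pow_le_pow_right₀ (one_le_mul_of_one_le_of_one_le hρ hX) hi)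
      (Real.exp_le_exp.2 ?_) (by positivity) (by positivity)
    gcongr
  have hscale : ∀ n t, |t| ≤ ρ ^ i * Real.exp (ρ * |j * l * X|) * (ρ ^ n)⁻¹ →
      |X ^ i * t| ≤ F * (ρ ^ n)⁻¹ := fun n t ht => by
    rw [abs_mul, abs_of_pos (by positivity)]
    refine (mul_le_mul_of_nonneg_left ht (by positivity)).trans ?_
    rw [← mul_assoc]
    gcongr
  refine ⟨fun n => X ^ i * c n, fun n => (hscale n _ (hc n)).trans ?_, fun z δ hz hδ => ?_⟩
  · have : 0 ≤ F * (ρ ^ n)⁻¹ := by positivity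
    linarith
  · have hunperturbed := hscale T _ <| happrox (z / X) <| by
      rwa [abs_div, abs_of_pos hX0, div_le_one hX0]
    have hexp : |Real.exp (j * δ) - 1| ≤ (ρ ^ T)⁻¹ :=
      abs_exp_mul_sub_one_le hj hδ (inv_le_one_of_one_le₀ (one_le_pow₀ hρ))
    have hsplit : z ^ i * Real.exp (l * z + δ) ^ j - ∑ n ∈ range T, X ^ i * c n * (z / X) ^ n =
        z ^ i * Real.exp (j * l * z) * (Real.exp (j * δ) - 1) +
        X ^ i * ((z / X) ^ i * Real.exp (j * l * X * (z / X)) -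
          ∑ n ∈ range T, c n * (z / X) ^ n) := by
      rw [← Real.exp_nat_mul, mul_add, Real.exp_add, mul_assoc _ X, mul_div_cancel₀ z hX0.ne',
        mul_sub (X ^ i), ← mul_assoc (X ^ i), ← mul_pow, mul_div_cancel₀ z hX0.ne']
      simp only [mul_assoc, ← mul_sum]
      ring
    calc _ ≤ F * (ρ ^ T)⁻¹ + F * (ρ ^ T)⁻¹ := by
          rw [hsplit]
          refine (abs_add_le _ _).trans (add_le_add ?_ hunperturbed)
          rw [abs_mul]
          gcongr
          exact abs_pow_mul_exp_le hρ hX l hi hj hz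
      _ = _ := by ring

end ExpApproximation

section HasHeightLE

open NumberField

variable {K : Type*} [Field K] [NumberField K] {φ : K →+* ℝ} {x y h h' : ℝ}

/-- `HasHeightLE φ x h` says that the real number `x` is a quotient of two algebraic integers of
the number field `K`, embedded in `ℝ` by `φ`, all of whose conjugates are at most `exp h` in
absolute value. It plays the role of an upper bound `h` for the logarithmic height of `x`. -/
def HasHeightLE (φ : K →+* ℝ) (x h : ℝ) : Prop :=
  ∃ u v : K, IsIntegral ℤ u ∧ IsIntegral ℤ v ∧ house u ≤ Real.exp h ∧ house v ≤ Real.exp h ∧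
    v ≠ 0 ∧ φ u = x * φ v

theorem HasHeightLE.mono (hx : HasHeightLE φ x h) (hh : h ≤ h') : HasHeightLE φ x h' :=
  let ⟨u, v, hu, hv, hhu, hhv, h0, huv⟩ := hx
  ⟨u, v, hu, hv, hhu.trans (Real.exp_le_exp.2 hh), hhv.trans (Real.exp_le_exp.2 hh), h0, huv⟩

theorem HasHeightLE.mul (hx : HasHeightLE φ x h) (hy : HasHeightLE φ y h') :
    HasHeightLE φ (x * y) (h + h') := by
  obtain ⟨u, v, hu, hv, hhu, hhv, h0, huv⟩ := hx
  obtain ⟨u', v', hu', hv', hhu', hhv', h0', huv'⟩ := hy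
  refine ⟨u * u', v * v', hu.mul hu', hv.mul hv', ?_, ?_, mul_ne_zero h0 h0', ?_⟩
  · rw [Real.exp_add]
    exact (house_mul_le _ _).trans (mul_le_mul hhu hhu' (house_nonneg _) (Real.exp_nonneg _))
  · rw [Real.exp_add]
    exact (house_mul_le _ _).trans (mul_le_mul hhv hhv' (house_nonneg _) (Real.exp_nonneg _))
  · rw [map_mul, map_mul, huv, huv']; ring

theorem HasHeightLE.pow (hx : HasHeightLE φ x h) (n : ℕ) : HasHeightLE φ (x ^ n) (n * h) := by
  obtain ⟨u, v, hu, hv, hhu, hhv, h0, huv⟩ := hx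
  refine ⟨u ^ n, v ^ n, hu.pow n, hv.pow n, ?_, ?_, pow_ne_zero n h0, ?_⟩
  · rw [Real.exp_nat_mul]
    exact (house_pow_le _ _).trans (pow_le_pow_left₀ (house_nonneg _) hhu n)
  · rw [Real.exp_nat_mul]
    exact (house_pow_le _ _).trans (pow_le_pow_left₀ (house_nonneg _) hhv n)
  · rw [map_pow, map_pow, huv, mul_pow]

end HasHeightLE

section InterpolationMatrix

/-- The interpolation matrix with rows `z r ^ i * θ r ^ j` for `i < κ` and `j < L`: its
determinants are those of the interpolation method for the functions `z ^ i * exp (j * l * z)`,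
taken at points `z r` where `exp (l * z r)` is close to the algebraic number `θ r`. -/
def interpMatrix {ι : Type*} (κ L : ℕ) (z θ : ι → ℝ) : Matrix ι (Fin κ × Fin L) ℝ :=
  Matrix.of fun r q => z r ^ (q.1 : ℕ) * θ r ^ (q.2 : ℕ)

theorem interpMatrix_mulVec_injective {κ L R S N : ℕ} {x y : ℝ} (hx : 0 < x) (hx1 : x ≠ 1)
    (hy : y ≠ 0) (hRN : R ≤ N) (hcard : κ * L ≤ R * S) :
    Function.Injective (interpMatrix κ L
      (fun p : Fin (L + R) × Fin S => ((p.1 + p.2 * N : ℕ) : ℝ))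
      (fun p => x ^ (p.1 : ℕ) * y ^ (p.2 : ℕ))).mulVec := by
  refine (injective_iff_map_eq_zero (Matrix.mulVecLin _)).2 fun v hv => ?_
  let P (j : Fin L) : ℝ[X] := ∑ i : Fin κ, C (v (i, j)) * X ^ (i : ℕ)
  have hP : P = 0 := by
    refine eq_zero_of_sum_eval_add_eq_zero (τ := Fin R × Fin S) (κ := κ)
      (c := fun j => x ^ (j : ℕ)) (z := fun t => ((t.1 + t.2 * N : ℕ) : ℝ))
      (w := fun t j => (x ^ (t.1 : ℕ) * y ^ (t.2 : ℕ)) ^ (j : ℕ))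
      (fun j => degree_sum_fin_lt fun i => v (i, j))
      (fun j j' hjj => Fin.ext (pow_right_injective₀ hx hx1 hjj)) (fun t t' htt => ?_)
      (fun t j => by positivity) (by simpa using hcard) fun t a ha => ?_
    · have htt' : (t.1 + t.2 * N : ℕ) = t'.1 + t'.2 * N := Nat.cast_injective htt
      have hfst : (t.1 : ℕ) = t'.1 := by
        have := congrArg (· % N) htt'
        simpa [Nat.mod_eq_of_lt (t.1.2.trans_le hRN), Nat.mod_eq_of_lt (t'.1.2.trans_le hRN)]
          using this
      rw [hfst, Nat.add_left_cancel_iff,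
        Nat.mul_left_inj (by have := t.1.2; omega)] at htt'
      exact Prod.ext (Fin.ext hfst) (Fin.ext htt')
    · rw [Fintype.card_fin] at ha
      have hrow := congrFun hv (⟨a + t.1, by omega⟩, t.2)
      simp only [Matrix.mulVecLin_apply, Matrix.mulVec, dotProduct, interpMatrix,
        Matrix.of_apply, Pi.zero_apply, Fintype.sum_prod_type_right] at hrow
      rw [← hrow]
      refine sum_congr rfl fun j _ => ?_
      simp only [P, eval_finsetSum, sum_mul, eval_mul, eval_C, eval_pow, eval_X]
      refine sum_congr rfl fun i _ => ?_
      push_cast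
      ring
  ext ⟨i, j⟩
  have hcoeff := congrArg (coeff · i) (congrFun hP j)
  simpa [P, coeff_X_pow, Fin.val_inj] using hcoeff

open NumberField in
theorem one_le_abs_det_interpMatrix_mul {K : Type*} [Field K] [NumberField K] {φ : K →+* ℝ}
    {κ L : ℕ} {z : Fin κ × Fin L → ℕ} {θ : Fin κ × Fin L → ℝ} {X h : ℝ} (hX : 1 ≤ X)
    (hh : 0 ≤ h) (hz : ∀ r, z r ≤ X) (hθ : ∀ r, HasHeightLE φ (θ r) h)
    (hdet : (interpMatrix κ L (fun r => z r) θ).det ≠ 0) :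
    1 ≤ |(interpMatrix κ L (fun r => z r) θ).det| * ((κ * L).factorial *
      (X ^ κ * Real.exp (L * h)) ^ (κ * L)) ^ Module.finrank ℚ K := by
  choose u v hu hv hhu hhv h0 huv using hθ
  have hpow : ∀ {a : K} (n : ℕ), house a ≤ Real.exp h → house (a ^ n) ≤ Real.exp h ^ n :=
    fun n ha => (house_pow_le _ n).trans (pow_le_pow_left₀ (house_nonneg _) ha n)
  have key := one_le_abs_det_mul_of_row_denominators φ (d := fun r => v r ^ L)
    (B := fun r q => (z r : K) ^ (q.1 : ℕ) * (u r ^ (q.2 : ℕ) * v r ^ (L - q.2)))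
    (E := X ^ κ * Real.exp (L * h)) ?_ hdet (fun r => pow_ne_zero L (h0 r)) ?_ ?_ ?_ ?_
  · simpa using key
  · intro r q
    simp only [interpMatrix, Matrix.of_apply, map_mul, map_pow, map_natCast, huv]
    rw [← pow_mul_pow_sub (φ (v r)) q.2.2.le, mul_pow]
    ring
  · exact fun r q => ((isIntegral_natCast (z r)).pow _).mul (((hu r).pow _).mul ((hv r).pow _))
  · exact one_le_mul_of_one_le_of_one_le (one_le_pow₀ hX) (Real.one_le_exp (by positivity))
  · intro r q
    have hzq : house ((z r : K) ^ (q.1 : ℕ)) ≤ X ^ κ := by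
      refine (house_pow_le _ _).trans ?_
      rw [← Int.cast_natCast, house_intCast, Nat.abs_cast, Int.cast_natCast]
      exact (pow_le_pow_left₀ (Nat.cast_nonneg _) (hz r) _).trans (pow_le_pow_right₀ hX q.1.2.le)
    refine (house_mul_le _ _).trans (mul_le_mul hzq ?_ (house_nonneg _) (by positivity))
    rw [Real.exp_nat_mul, ← pow_mul_pow_sub _ q.2.2.le]
    exact (house_mul_le _ _).trans
      (mul_le_mul (hpow _ (hhu r)) (hpow _ (hhv r)) (house_nonneg _) (by positivity))
  · intro r
    rw [Real.exp_nat_mul]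
    exact (hpow L (hhv r)).trans (le_mul_of_one_le_left (by positivity) (one_le_pow₀ hX))

theorem abs_det_interpMatrix_le {κ L : ℕ} {z δ : Fin κ × Fin L → ℝ} {l X ρ : ℝ} (hX : 1 ≤ X)
    (hρ : 1 ≤ ρ) (hz : ∀ r, |z r| ≤ X) (hδ : ∀ r, 2 * (L * |δ r|) ≤ (ρ ^ (κ * L))⁻¹) :
    |(interpMatrix κ L z fun r => Real.exp (l * z r + δ r)).det| ≤
      (κ * L + 1 : ℝ) ^ (κ * L) * ((κ * L).factorial *
        (2 * ((ρ * X) ^ κ * Real.exp (L * (ρ * (|l| * X))))) ^ (κ * L) *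
        (ρ ^ ∑ n ∈ range (κ * L), n)⁻¹) := by
  have hX0 : 0 < X := one_pos.trans_le hX
  choose c hc happrox using fun q : Fin κ × Fin L =>
    exists_coeff_exp_monomial_approx hρ hX l q.1.2.le q.2.2.le
      (Nat.le_mul_of_pos_right κ (Fin.pos q.2))
  have key := abs_det_le_of_approx_by_monomials (u := fun r => z r / X) (c := c)
    (by positivity) hρ (fun r => ?_) hc (A := interpMatrix κ L z fun r => Real.exp (l * z r + δ r))
    fun r q => ?_
  · simpa using key
  · rw [abs_div, abs_of_pos hX0, div_le_one hX0]
    exact hz r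
  · simpa [interpMatrix] using happrox q (z r) (δ r) (hz r) (hδ r)

end InterpolationMatrix

section TwoLogarithms

theorem pow_pred_le_sq_of_det_bounds {T d D : ℕ} {Δ E F ρ : ℝ} (hT : 0 < T) (hdD : d ≤ D)
    (hE : 1 ≤ E) (hF : 0 ≤ F) (hρ : 1 ≤ ρ) (hlow : 1 ≤ Δ * (T.factorial * E ^ T) ^ d)
    (hupp : Δ ≤ (T + 1 : ℝ) ^ T * (T.factorial * F ^ T * (ρ ^ ∑ n ∈ range T, n)⁻¹)) :
    ρ ^ (T - 1) ≤ ((T + 1) * T * F * (T * E) ^ D) ^ 2 := by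
  have hfact : (T.factorial : ℝ) ≤ (T : ℝ) ^ T := by exact_mod_cast T.factorial_le_pow
  have hone : (1 : ℝ) ≤ T.factorial := by exact_mod_cast T.factorial_pos
  set B : ℝ := (T + 1) * T * F * (T * E) ^ D
  have hTE : (T.factorial * E ^ T) ^ d ≤ ((T * E) ^ D) ^ T := by
    calc (T.factorial * E ^ T) ^ d ≤ (T.factorial * E ^ T) ^ D :=
          pow_le_pow_right₀ (one_le_mul_of_one_le_of_one_le hone (one_le_pow₀ hE)) hdD
      _ ≤ (T ^ T * E ^ T) ^ D := by gcongr
      _ = ((T * E) ^ D) ^ T := by rw [← mul_pow, ← pow_mul, ← pow_mul, mul_comm T D]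
  have hB : ρ ^ ∑ n ∈ range T, n ≤ B ^ T := by
    have : 1 ≤ B ^ T * (ρ ^ ∑ n ∈ range T, n)⁻¹ := by
      calc 1 ≤ Δ * (T.factorial * E ^ T) ^ d := hlow
        _ ≤ (T + 1) ^ T * (T.factorial * F ^ T * (ρ ^ ∑ n ∈ range T, n)⁻¹) *
            ((T * E) ^ D) ^ T := by gcongr
        _ ≤ (T + 1) ^ T * (T ^ T * F ^ T * (ρ ^ ∑ n ∈ range T, n)⁻¹) * ((T * E) ^ D) ^ T := by
            gcongr
        _ = _ := by simp only [B, mul_pow]; ring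
    rwa [← div_eq_mul_inv, one_le_div₀ (by positivity)] at this
  refine (pow_le_pow_iff_left₀ (by positivity) (by positivity) hT.ne').1 ?_
  calc (ρ ^ (T - 1)) ^ T = (ρ ^ ∑ n ∈ range T, n) ^ 2 := by
        rw [← pow_mul, ← pow_mul, sum_range_id_mul_two, mul_comm]
    _ ≤ (B ^ T) ^ 2 := by gcongr
    _ = (B ^ 2) ^ T := pow_right_comm B T 2

theorem inv_pow_lt_abs_of_interpolation {K : Type*} [Field K] [NumberField K] {φ : K →+* ℝ}
    {D κ L R S N : ℕ} {l Λ h₁ h₂ X ρ : ℝ} (hl : l ≠ 0) (hh₁ : 0 ≤ h₁) (hh₂ : 0 ≤ h₂)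
    (hx : HasHeightLE φ (Real.exp l) h₁) (hy : HasHeightLE φ (Real.exp (Λ + N * l)) h₂)
    (hD : Module.finrank ℚ K ≤ D) (hκL : 0 < κ * L) (hRN : R ≤ N) (hcard : κ * L ≤ R * S)
    (hX1 : 1 ≤ X) (hX : L + R + S * N ≤ X) (hρ : 1 ≤ ρ)
    (hbig : (((κ * L : ℕ) + 1) * (κ * L : ℕ) *
      (2 * ((ρ * X) ^ κ * Real.exp (L * (ρ * (|l| * X))))) *
      ((κ * L : ℕ) * (X ^ κ * Real.exp (L * ((L + R) * h₁ + S * h₂)))) ^ D) ^ 2 <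
        ρ ^ (κ * L - 1)) :
    (ρ ^ (κ * L))⁻¹ < 2 * (L * (S * |Λ|)) := by
  by_contra! hsmall
  obtain ⟨f, hf⟩ := exists_submatrix_det_ne_zero _
    (interpMatrix_mulVec_injective (R := R) (S := S) (N := N) (κ := κ) (L := L)
      (Real.exp_pos l) (by simpa using hl) (Real.exp_pos (Λ + N * l)).ne' hRN hcard)
  have hpoint : ∀ p : Fin (L + R) × Fin S, (p.1 : ℝ) ≤ L + R ∧ (p.2 : ℝ) ≤ S := fun p =>
    ⟨by exact_mod_cast p.1.2.le, by exact_mod_cast p.2.2.le⟩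
  have hz : ∀ q, ((f q).1 + (f q).2 * N : ℕ) ≤ X := fun q => by
    push_cast
    exact (add_le_add (hpoint _).1 (mul_le_mul_of_nonneg_right (hpoint _).2 N.cast_nonneg)).trans hX
  have hheight : ∀ q, HasHeightLE φ
      (Real.exp l ^ ((f q).1 : ℕ) * Real.exp (Λ + N * l) ^ ((f q).2 : ℕ))
      ((L + R) * h₁ + S * h₂) := fun q =>
    ((hx.pow _).mul (hy.pow _)).mono <| add_le_add
      (mul_le_mul_of_nonneg_right (hpoint _).1 hh₁) (mul_le_mul_of_nonneg_right (hpoint _).2 hh₂)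
  have hlow := one_le_abs_det_interpMatrix_mul hX1 (by positivity) hz hheight hf
  have hexp : (fun q => Real.exp l ^ ((f q).1 : ℕ) * Real.exp (Λ + N * l) ^ ((f q).2 : ℕ)) =
      fun q => Real.exp (l * ((f q).1 + (f q).2 * N : ℕ) + ((f q).2 : ℕ) * Λ) := by
    funext q
    rw [← Real.exp_nat_mul, ← Real.exp_nat_mul, ← Real.exp_add]
    push_cast
    ring_nf
  have hupp := abs_det_interpMatrix_le (l := l) (δ := fun q => ((f q).2 : ℕ) * Λ) hX1 hρ
    (fun q => (Nat.abs_cast _).trans_le (hz q)) fun q => by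
      refine le_trans ?_ hsmall
      rw [abs_mul, Nat.abs_cast]
      gcongr
      exact (f q).2.2.le
  rw [hexp] at hlow
  refine hbig.not_ge (pow_pred_le_sq_of_det_bounds hκL hD ?_ (by positivity) hρ hlow
    (by exact_mod_cast hupp))
  exact one_le_mul_of_one_le_of_one_le (one_le_pow₀ hX1) (Real.one_le_exp (by positivity))

end TwoLogarithms

section TwoLogarithmsParameters

theorem exp_six_le : Real.exp 6 ≤ 404 := by
  calc Real.exp 6 = Real.exp 1 ^ 6 := by rw [← Real.exp_nat_mul]; norm_num
    _ ≤ 2.7182818286 ^ 6 := by gcongr; exact Real.exp_one_lt_d9.le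
    _ ≤ 404 := by norm_num

theorem cube_mul_two_pow_le_exp {w : ℕ} (hw : 968 ≤ w) :
    240000 * (w : ℝ) ^ 3 * 2 ^ w ≤ Real.exp (0.75 * w) := by
  have hwR : (968 : ℝ) ≤ w := by exact_mod_cast hw
  have hcube : 240000 * (w : ℝ) ^ 3 ≤ Real.exp (0.05 * w) := by
    refine le_trans ?_ (Real.pow_div_factorial_le_exp (0.05 * w) (by positivity) 20)
    rw [le_div_iff₀ (by positivity)]
    calc 240000 * (w : ℝ) ^ 3 * (Nat.factorial 20 : ℕ) ≤ (w : ℝ) ^ 3 * (0.05 ^ 20 * 968 ^ 17) := by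
          norm_num [Nat.factorial]
          linarith [pow_pos (show (0 : ℝ) < w by linarith) 3]
      _ ≤ (w : ℝ) ^ 3 * (0.05 ^ 20 * (w : ℝ) ^ 17) := by gcongr
      _ = _ := by ring
  have htwo : (2 : ℝ) ^ w ≤ Real.exp (0.7 * w) := by
    rw [← Real.exp_log (zero_lt_two' ℝ), ← Real.exp_nat_mul, Real.exp_le_exp]
    nlinarith [Real.log_two_lt_d9]
  calc _ ≤ Real.exp (0.05 * w) * Real.exp (0.7 * w) := by gcongr
    _ = _ := by rw [← Real.exp_add]; ring_nf

variable {k w H₁ H₂ : ℝ}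

theorem eight_mul_add_one_le_exp (hk : 1 ≤ k) (hw : 1 ≤ w) (hH₁ : 1 ≤ H₁) (hH₂ : 1 ≤ H₂) :
    8 * (k ^ 4 * w ^ 2 * H₁ * H₂) + 1 ≤ Real.exp (10 + 4 * k + 2 * w + H₁ + H₂) := by
  have le_exp (x : ℝ) : x ≤ Real.exp x := by linarith [Real.add_one_le_exp x]
  have hone : (1 : ℝ) ^ 4 * 1 ^ 2 * 1 * 1 ≤ k ^ 4 * w ^ 2 * H₁ * H₂ := by gcongr
  calc 8 * (k ^ 4 * w ^ 2 * H₁ * H₂) + 1 ≤ 10 * (k ^ 4 * w ^ 2 * H₁ * H₂) := by linarith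
    _ ≤ Real.exp 10 * (Real.exp k ^ 4 * Real.exp w ^ 2 * Real.exp H₁ * Real.exp H₂) := by
        gcongr <;> exact le_exp _
    _ = _ := by
        simp only [← Real.exp_nat_mul, ← Real.exp_add]
        push_cast
        ring_nf

theorem height_sum_le (hk : 1 ≤ k) (hw : 1 ≤ w) (hH₁ : 1 ≤ H₁) (hH₂ : 1 ≤ H₂) :
    10 + 4 * k + 2 * w + H₁ + H₂ ≤ 20 * (k * w * H₁ * H₂) := by
  have h₁ : 1 * 1 * 1 * 1 ≤ k * w * H₁ * H₂ := by gcongr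
  have h₂ : k * 1 * 1 * 1 ≤ k * w * H₁ * H₂ := by gcongr
  have h₃ : 1 * w * 1 * 1 ≤ k * w * H₁ * H₂ := by gcongr
  have h₄ : 1 * 1 * H₁ * 1 ≤ k * w * H₁ * H₂ := by gcongr
  have h₅ : 1 * 1 * 1 * H₂ ≤ k * w * H₁ * H₂ := by gcongr
  linarith

theorem det_exponent_lt {τ y : ℝ} (hk : 471 ≤ k) (hw : 968 ≤ w) (hH₁ : 1 ≤ H₁) (hH₂ : 1 ≤ H₂)
    (hτ : τ = 10 + 4 * k + 2 * w + H₁ + H₂) (hy : y ≤ (2 * k ^ 2 * w * H₁ + 2) * H₂) :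
    τ + τ + (2 + (8 * k ^ 3 * w * H₁ * H₂ * (6 + 0.75 * w) + k * w * (Real.exp 6 * y))) +
      k * (τ + (8 * k ^ 3 * w * H₁ * H₂ * (0.75 * w) +
        k * w * ((k * w + 4 * k ^ 2 * w * H₂) * H₁ + 2 * k ^ 2 * w * H₁ * H₂))) <
      3 * (8 * (k ^ 4 * w ^ 2 * H₁ * H₂) - 1) := by
  have hk1 : 1 ≤ k := by linarith
  have hw1 : 1 ≤ w := by linarith
  set a := k ^ 3 * w ^ 2 * H₁ * H₂ with ha
  have ha1 : 1 ≤ a := by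
    calc (1 : ℝ) = 1 ^ 3 * 1 ^ 2 * 1 * 1 := by norm_num
      _ ≤ a := by rw [ha]; gcongr
  have hlead : 471 * a ≤ k * a := by gcongr
  have hquad : k * w * H₂ ≤ a := by
    calc k * w * H₂ = k ^ 1 * w ^ 1 * 1 * H₂ := by ring
      _ ≤ a := by rw [ha]; gcongr <;> norm_num
  have hexp : k * w * (Real.exp 6 * y) ≤ 404 * (4 * a) := by
    calc k * w * (Real.exp 6 * y) ≤ k * w * (404 * ((2 * k ^ 2 * w * H₁ + 2) * H₂)) := by
          grw [hy, exp_six_le]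
      _ = 404 * (2 * a + 2 * (k * w * H₂)) := by rw [ha]; ring
      _ ≤ 404 * (4 * a) := by linarith
  have hlow : k ^ 3 * w ^ 2 * H₁ ≤ a := le_mul_of_one_le_right (by positivity) hH₂
  have hsix : 8 * k ^ 3 * w * H₁ * H₂ * (6 + 0.75 * w) ≤ 8 * a := by
    calc _ ≤ 8 * k ^ 3 * w * H₁ * H₂ * w := by gcongr; linarith
      _ = 8 * a := by rw [ha]; ring
  have hkτ : k * τ ≤ 20 * a := by
    calc k * τ ≤ k * (20 * (k * w * H₁ * H₂)) := by
          rw [hτ]; gcongr; exact height_sum_le hk1 hw1 hH₁ hH₂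
      _ = 20 * (k ^ 2 * w ^ 1 * H₁ * H₂) := by ring
      _ ≤ 20 * a := by rw [ha]; gcongr <;> norm_num
  have hττ : τ ≤ k * τ := le_mul_of_one_le_left (by rw [hτ]; positivity) hk1
  have hκ : k * (8 * k ^ 3 * w * H₁ * H₂ * (0.75 * w)) = 6 * (k * a) := by rw [ha]; ring
  have hheight : k * (k * w * ((k * w + 4 * k ^ 2 * w * H₂) * H₁ + 2 * k ^ 2 * w * H₁ * H₂)) =
      6 * (k * a) + k ^ 3 * w ^ 2 * H₁ := by rw [ha]; ring
  have hP : k ^ 4 * w ^ 2 * H₁ * H₂ = k * a := by rw [ha]; ring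
  rw [hP, mul_add k, mul_add k, hκ, hheight]
  linarith [ha1]

theorem width_le_exp {k w H₁ N : ℕ} (hk : 471 ≤ k) (hw : 968 ≤ w) (hH₁ : 1 ≤ H₁)
    (hkw : k ≤ 200 * w) (hHN : H₁ * N ≤ 2 * 2 ^ w) :
    (2 * (k : ℝ) ^ 2 * w * H₁ + 2) * N ≤ Real.exp (0.75 * w) := by
  refine le_trans ?_ (cube_mul_two_pow_le_exp hw)
  exact_mod_cast calc
    (2 * k ^ 2 * w * H₁ + 2) * N ≤ (2 * k ^ 2 * w * H₁ + k ^ 2 * w * H₁) * N := by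
          gcongr
          calc 2 ≤ 471 ^ 2 * 968 * 1 := by norm_num
            _ ≤ k ^ 2 * w * H₁ := by gcongr
    _ = 3 * (k ^ 2 * w) * (H₁ * N) := by ring
    _ ≤ 3 * ((200 * w) ^ 2 * w) * (2 * 2 ^ w) := by gcongr
    _ = 240000 * w ^ 3 * 2 ^ w := by ring

theorem det_bound_sq_lt {k w H₁ H₂ : ℕ} {X y : ℝ} (hk : 471 ≤ k) (hw : 968 ≤ w) (hH₁ : 1 ≤ H₁)
    (hH₂ : 1 ≤ H₂) (hX0 : 0 ≤ X) (hX : X ≤ Real.exp (0.75 * w))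
    (hy : y ≤ (2 * k ^ 2 * w * H₁ + 2) * H₂) :
    ((8 * (k ^ 4 * w ^ 2 * H₁ * H₂) + 1) * (8 * (k ^ 4 * w ^ 2 * H₁ * H₂)) *
      (2 * ((Real.exp 6 * X) ^ (8 * k ^ 3 * w * H₁ * H₂) * Real.exp (k * w * (Real.exp 6 * y)))) *
      (8 * (k ^ 4 * w ^ 2 * H₁ * H₂) * (X ^ (8 * k ^ 3 * w * H₁ * H₂) *
        Real.exp (k * w * ((k * w + 4 * k ^ 2 * w * H₂) * H₁ +
          2 * k ^ 2 * w * H₁ * H₂)))) ^ k) ^ 2 <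
      Real.exp (6 * (8 * (k ^ 4 * w ^ 2 * H₁ * H₂) - 1)) := by
  have hkR : (471 : ℝ) ≤ k := by exact_mod_cast hk
  have hwR : (968 : ℝ) ≤ w := by exact_mod_cast hw
  have hH₁R : (1 : ℝ) ≤ H₁ := by exact_mod_cast hH₁
  have hH₂R : (1 : ℝ) ≤ H₂ := by exact_mod_cast hH₂
  obtain ⟨τ, hτ⟩ : ∃ τ : ℝ, τ = 10 + 4 * k + 2 * w + H₁ + H₂ := ⟨_, rfl⟩
  have hτ1 : 8 * (k ^ 4 * w ^ 2 * H₁ * H₂ : ℝ) + 1 ≤ Real.exp τ := by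
    rw [hτ]
    exact eight_mul_add_one_le_exp (by linarith) (by linarith) hH₁R hH₂R
  have hτ0 : 8 * (k ^ 4 * w ^ 2 * H₁ * H₂ : ℝ) ≤ Real.exp τ := by linarith
  have htwo : (2 : ℝ) ≤ Real.exp 2 := by linarith [Real.add_one_le_exp 2]
  calc _ ≤ (Real.exp τ * Real.exp τ * (Real.exp 2 * ((Real.exp 6 * Real.exp (0.75 * w)) ^
          (8 * k ^ 3 * w * H₁ * H₂) * Real.exp (k * w * (Real.exp 6 * y)))) *
        (Real.exp τ * (Real.exp (0.75 * w) ^ (8 * k ^ 3 * w * H₁ * H₂) * Real.exp (k * w *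
          ((k * w + 4 * k ^ 2 * w * H₂) * H₁ + 2 * k ^ 2 * w * H₁ * H₂)))) ^ k) ^ 2 := by gcongr
    _ = Real.exp (2 * (τ + τ + (2 + (8 * k ^ 3 * w * H₁ * H₂ * (6 + 0.75 * w) +
          k * w * (Real.exp 6 * y))) + k * (τ + (8 * k ^ 3 * w * H₁ * H₂ * (0.75 * w) +
          k * w * ((k * w + 4 * k ^ 2 * w * H₂) * H₁ + 2 * k ^ 2 * w * H₁ * H₂))))) := by
        simp only [← Real.exp_nat_mul, ← Real.exp_add]
        push_cast
        rfl
    _ < _ := by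
        rw [Real.exp_lt_exp]
        linarith [det_exponent_lt hkR hwR hH₁R hH₂R hτ hy]

theorem add_add_le_width {k w H₁ H₂ N : ℕ} (hk : 1 ≤ k) (hH₂ : 1 ≤ H₂)
    (hN : 4 * k ^ 2 * w * H₂ ≤ N) :
    k * w + 4 * k ^ 2 * w * H₂ + 2 * k ^ 2 * w * H₁ * N ≤ (2 * k ^ 2 * w * H₁ + 2) * N := by
  have hLN : k * w ≤ N := by
    calc k * w ≤ k * w * (4 * k * H₂) := Nat.le_mul_of_pos_right _ (by positivity)
      _ = 4 * k ^ 2 * w * H₂ := by ring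
      _ ≤ N := hN
  linarith

theorem two_mul_mul_le_exp {k w H₁ H₂ : ℕ} (hk : 4 ≤ k) (hH₂ : 1 ≤ H₂) :
    2 * ((k * w : ℕ) * (2 * k ^ 2 * w * H₁ : ℕ)) ≤ Real.exp (k ^ 4 * w ^ 2 * H₁ * H₂) := by
  have hnat : 2 * (k * w * (2 * k ^ 2 * w * H₁)) ≤ k ^ 4 * w ^ 2 * H₁ * H₂ := by
    calc 2 * (k * w * (2 * k ^ 2 * w * H₁)) = 4 * (k ^ 3 * w ^ 2 * H₁) * 1 := by ring
      _ ≤ k * (k ^ 3 * w ^ 2 * H₁) * H₂ := by gcongr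
      _ = _ := by ring
  calc (2 * ((k * w : ℕ) * (2 * k ^ 2 * w * H₁ : ℕ)) : ℝ) ≤ k ^ 4 * w ^ 2 * H₁ * H₂ := by
        exact_mod_cast hnat
    _ ≤ _ := by linarith [Real.add_one_le_exp (k ^ 4 * w ^ 2 * H₁ * H₂ : ℝ)]

/- With `ρ = exp 6` and `κ * L = 8 * k ^ 4 * w ^ 2 * H₁ * H₂`, interpolation yields the exponent
`48 * k ^ 4 * w ^ 2 * H₁ * H₂`; the 49th unit absorbs the factor `2 * L * S`. -/
theorem exp_neg_le_abs_of_hasHeightLE {K : Type*} [Field K] [NumberField K] {φ : K →+* ℝ}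
    {k w H₁ H₂ N : ℕ} {l Λ : ℝ} (hk : 471 ≤ k) (hw : 968 ≤ w) (hkw : k ≤ 200 * w)
    (hH₁ : 1 ≤ H₁) (hH₂ : 1 ≤ H₂) (hD : Module.finrank ℚ K ≤ k) (hl : l ≠ 0)
    (hx : HasHeightLE φ (Real.exp l) H₁) (hy : HasHeightLE φ (Real.exp (Λ + N * l)) H₂)
    (hHN : H₁ * N ≤ 2 * 2 ^ w) (hN : 4 * k ^ 2 * w * H₂ ≤ N) (hlN : |l| * N ≤ H₂) :
    Real.exp (-(49 * (k ^ 4 * w ^ 2 * H₁ * H₂))) ≤ |Λ| := by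
  set X : ℝ := (2 * (k : ℝ) ^ 2 * w * H₁ + 2) * N with hX
  have hXwidth : ((k * w + 4 * k ^ 2 * w * H₂ + 2 * k ^ 2 * w * H₁ * N : ℕ) : ℝ) ≤ X := by
    rw [hX]
    exact_mod_cast add_add_le_width (by omega) hH₂ hN
  have hX1 : 1 ≤ X := by
    have : 0 < k * w := Nat.mul_pos (by omega) (by omega)
    exact le_trans (by exact_mod_cast (by omega)) hXwidth
  have hlX : |l| * X ≤ (2 * k ^ 2 * w * H₁ + 2) * H₂ := by
    calc |l| * X = (2 * (k : ℝ) ^ 2 * w * H₁ + 2) * (|l| * N) := by rw [hX]; ring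
      _ ≤ _ := by gcongr
  have hT : 8 * k ^ 3 * w * H₁ * H₂ * (k * w) = 8 * (k ^ 4 * w ^ 2 * H₁ * H₂) := by ring
  have hpos : 0 < 8 * (k ^ 4 * w ^ 2 * H₁ * H₂) := by positivity
  have hinterp := inv_pow_lt_abs_of_interpolation (D := k) (κ := 8 * k ^ 3 * w * H₁ * H₂)
    (L := k * w) (R := 4 * k ^ 2 * w * H₂) (S := 2 * k ^ 2 * w * H₁) (X := X) (ρ := Real.exp 6)
    hl (by positivity) (by positivity) hx hy hD (hT ▸ hpos) hN (le_of_eq (by ring)) hX1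
    (by exact_mod_cast hXwidth) (Real.one_le_exp (by norm_num)) (by
      rw [hT, ← Real.exp_nat_mul, Nat.cast_pred hpos]
      have := det_bound_sq_lt hk hw hH₁ hH₂ (by linarith) (width_le_exp hk hw hH₁ hkw hHN) hlX
      push_cast
      rwa [mul_comm _ (6 : ℝ)])
  rw [hT, ← Real.exp_nat_mul, ← Real.exp_neg] at hinterp
  calc Real.exp (-(49 * (k ^ 4 * w ^ 2 * H₁ * H₂))) =
        Real.exp (-((8 * (k ^ 4 * w ^ 2 * H₁ * H₂) : ℕ) * 6)) *
          Real.exp (-(k ^ 4 * w ^ 2 * H₁ * H₂)) := by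
        rw [← Real.exp_add]
        push_cast
        ring_nf
    _ ≤ Real.exp (k ^ 4 * w ^ 2 * H₁ * H₂) * |Λ| * Real.exp (-(k ^ 4 * w ^ 2 * H₁ * H₂)) := by
        gcongr
        refine hinterp.le.trans ?_
        rw [← mul_assoc _ _ |Λ|, ← mul_assoc]
        gcongr
        exact two_mul_mul_le_exp (by omega) hH₂
    _ = |Λ| := by rw [mul_right_comm, ← Real.exp_add, add_neg_cancel, Real.exp_zero, one_mul]

end TwoLogarithmsParameters

section Recurrence

variable {k : ℕ}

theorem genLucas_of_lt {m : ℕ} (h : m < k - 2) : genLucas k m = 0 := by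
  rw [genLucas, dif_pos h]

theorem genLucas_sub_two (k : ℕ) : genLucas k (k - 2) = 2 := by
  rw [genLucas, dif_neg (lt_irrefl _), dif_pos rfl]

theorem genLucas_sub_one (hk : 2 ≤ k) : genLucas k (k - 1) = 1 := by
  rw [genLucas, dif_neg (by omega), dif_neg (by omega), dif_pos rfl]

theorem genLucas_add_self (hk : 2 ≤ k) (m : ℕ) :
    genLucas k (m + k) = ∑ i ∈ range k, genLucas k (m + k - 1 - i) := by
  rw [genLucas, dif_neg (by omega), dif_neg (by omega), dif_neg (by omega)]

theorem sum_range_mul_genLucas_initial (hk : 2 ≤ k) {R : Type*} [CommRing R] (c : ℕ → R) :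
    ∑ j ∈ range k, c j * (genLucas k (k - 1 - j) : R) = c 0 + 2 * c 1 := by
  obtain ⟨j, rfl⟩ := Nat.exists_eq_add_of_le' hk
  have hzero : ∑ i ∈ range j,
      c (i + 1 + 1) * (genLucas (j + 2) (j + 2 - 1 - (i + 1 + 1)) : R) = 0 :=
    sum_eq_zero fun i hi => by
      rw [mem_range] at hi
      rw [genLucas_of_lt (by omega), Int.cast_zero, mul_zero]
  have h₁ : genLucas (j + 2) (j + 2 - 1 - (0 + 1)) = 2 := genLucas_sub_two (j + 2)
  have h₀ : genLucas (j + 2) (j + 2 - 1 - 0) = 1 := genLucas_sub_one hk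
  rw [sum_range_succ', sum_range_succ', hzero, h₁, h₀]
  push_cast
  ring

theorem genLucas_self (hk : 2 ≤ k) : genLucas k k = 3 := by
  have h := genLucas_add_self hk 0
  have h' := sum_range_mul_genLucas_initial hk (R := ℤ) 1
  simp only [zero_add, Pi.one_apply, one_mul, Int.cast_id] at h h'
  rw [h, h']
  norm_num

theorem genLucas_add_succ (hk : 2 ≤ k) (m : ℕ) :
    genLucas k (m + k + 1) = 2 * genLucas k (m + k) - genLucas k m := by
  obtain ⟨j, rfl⟩ := Nat.exists_eq_add_of_le' (one_le_two.trans hk)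
  have hnext := genLucas_add_self hk (m + 1)
  have hself := genLucas_add_self hk m
  rw [sum_range_succ', sum_congr rfl fun i _ => by
    rw [show m + 1 + (j + 1) - 1 - (i + 1) = m + (j + 1) - 1 - i by omega]] at hnext
  rw [sum_range_succ] at hself
  rw [show m + 1 + (j + 1) - 1 - 0 = m + (j + 1) by omega, add_right_comm m 1] at hnext
  rw [show m + (j + 1) - 1 - j = m by omega] at hself
  linarith

theorem lucasL_zero (k : ℕ) : lucasL k 0 = 2 := by
  rw [lucasL, zero_add, genLucas_sub_two]

theorem lucasL_one (hk : 2 ≤ k) : lucasL k 1 = 1 := by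
  rw [lucasL, ← genLucas_sub_one hk, add_comm, Nat.add_sub_add_right k 1 1]

theorem lucasL_two (hk : 2 ≤ k) : lucasL k 2 = 3 := by
  rw [lucasL, add_tsub_cancel_left, genLucas_self hk]

theorem lucasL_add_succ (hk : 2 ≤ k) (n : ℕ) :
    lucasL k (n + k + 1) = 2 * lucasL k (n + k) - lucasL k n := by
  have h := genLucas_add_succ hk (n + k - 2)
  simp only [lucasL]
  rwa [show n + k + 1 + k - 2 = n + k - 2 + k + 1 by omega,
    show n + k + k - 2 = n + k - 2 + k by omega]

theorem lucasL_succ_of_lt {n : ℕ} (h2 : 2 ≤ n) (hn : n < k) :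
    lucasL k (n + 1) = 2 * lucasL k n := by
  have h := genLucas_add_succ (h2.trans hn.le) (n - 2)
  rw [genLucas_of_lt (show n - 2 < k - 2 by omega), sub_zero] at h
  simp only [lucasL]
  rwa [show n + 1 + k - 2 = n - 2 + k + 1 by omega, show n + k - 2 = n - 2 + k by omega]

end Recurrence

section DominantRoot

/-- `α` is the dominant root of `X ^ k - X ^ (k - 1) - ⋯ - 1`. Since that polynomial times `X - 1`
is `X ^ k * (X - 2) + 1`, the root is encoded as a solution of `α ^ k * (2 - α) = 1` in
`(15 / 8, 2)`, the lower bound ruling out the solution `α = 1`. -/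
structure IsDominantRoot (k : ℕ) (α : ℝ) : Prop where
  lower : 15 / 8 < α
  lt_two : α < 2
  pow_mul : α ^ k * (2 - α) = 1

variable {k : ℕ} {α : ℝ}

theorem two_mul_le_pow (hk : 4 ≤ k) : 2 * (k : ℝ) ≤ (15 / 8 : ℝ) ^ k := by
  induction k, hk using Nat.le_induction with
  | base => norm_num
  | succ n hn ih =>
    have : (4 : ℝ) ≤ n := by exact_mod_cast hn
    rw [pow_succ]
    push_cast
    linarith

theorem exists_isDominantRoot (hk : 5 ≤ k) : ∃ α, IsDominantRoot k α := by
  have hk' : (5 : ℝ) ≤ k := by exact_mod_cast hk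
  have hcont : ContinuousOn (fun x : ℝ => x ^ k * (2 - x)) (Set.Icc (15 / 8) 2) := by fun_prop
  have hpow := two_mul_le_pow (by omega : 4 ≤ k)
  obtain ⟨x, hx, hx1⟩ := intermediate_value_Ioo' (by norm_num) hcont
    (show (1 : ℝ) ∈ Set.Ioo _ _ from ⟨by norm_num, by linarith⟩)
  exact ⟨x, hx.1, hx.2, hx1⟩

namespace IsDominantRoot

theorem pow_eq_geom_sum (h : IsDominantRoot k α) : α ^ k = ∑ i ∈ range k, α ^ i := by
  have := h.lower
  rw [geom_sum_eq (by linarith), eq_div_iff (by linarith)]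
  linarith [h.pow_mul]

theorem two_mul_mul_two_sub_le (h : IsDominantRoot k α) (hk : 4 ≤ k) : 2 * (k * (2 - α)) ≤ 1 := by
  have hpow : 2 * (k : ℝ) ≤ α ^ k := by grw [two_mul_le_pow hk, h.lower]
  rw [← h.pow_mul, ← mul_assoc]
  exact mul_le_mul_of_nonneg_right hpow (by linarith [h.lt_two])

theorem one_le_den (h : IsDominantRoot k α) (hk : 4 ≤ k) : 1 ≤ (k + 1) * α - 2 * k := by
  linarith [h.two_mul_mul_two_sub_le hk, h.lower]

theorem den_le_two (h : IsDominantRoot k α) : (k + 1) * α - 2 * k ≤ 2 := by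
  linarith [mul_nonneg k.cast_nonneg (sub_nonneg.2 h.lt_two.le), h.lt_two]

theorem one_le_num (h : IsDominantRoot k α) : 1 ≤ (2 * α - 1) * (α - 1) := by
  nlinarith [h.lower]

theorem num_le_three (h : IsDominantRoot k α) : (2 * α - 1) * (α - 1) ≤ 3 := by
  nlinarith [h.lower, h.lt_two]

end IsDominantRoot

end DominantRoot

section BinetFormula

variable {k : ℕ} {α : ℝ}

theorem sub_sum_window_eq_pow_mul {x : ℕ → ℝ} (hk : 0 < k) (hα : α ^ k * (2 - α) = 1)
    (hx : ∀ m, x (m + k + 1) = 2 * x (m + k) - x m) (m : ℕ) :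
    x (m + k) - ∑ j ∈ range k, (2 - α) * α ^ j * x (m + k - 1 - j) =
      α ^ m * (x k - ∑ j ∈ range k, (2 - α) * α ^ j * x (k - 1 - j)) := by
  obtain ⟨k, rfl⟩ := Nat.exists_eq_add_of_le' (Nat.succ_le_of_lt hk)
  induction m with
  | zero => simp
  | succ m ih =>
    have hshift : ∑ j ∈ range k, (2 - α) * α ^ (j + 1) * x (m + 1 + (k + 1) - 1 - (j + 1)) =
        α * ∑ j ∈ range k, (2 - α) * α ^ j * x (m + (k + 1) - 1 - j) := by
      rw [mul_sum]
      refine sum_congr rfl fun j _ => ?_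
      rw [show m + 1 + (k + 1) - 1 - (j + 1) = m + (k + 1) - 1 - j by omega]
      ring
    rw [sum_range_succ, show m + (k + 1) - 1 - k = m by omega] at ih
    rw [pow_succ α m, mul_right_comm, ← ih, sum_range_succ', hshift,
      show m + 1 + (k + 1) - 1 - 0 = m + (k + 1) by omega, add_right_comm m 1, hx]
    linear_combination x m * hα

theorem abs_le_of_eq_weighted_sum {x w : ℕ → ℝ} {c : ℝ} (hw : ∀ j, 0 ≤ w j)
    (hsum : ∑ j ∈ range k, w j = 1) (hinit : ∀ m < k, |x m| ≤ c)
    (hx : ∀ m, x (m + k) = ∑ j ∈ range k, w j * x (m + k - 1 - j)) (m : ℕ) : |x m| ≤ c := by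
  induction m using Nat.strong_induction_on with
  | _ m ih =>
    obtain hm | hm := lt_or_ge m k
    · exact hinit m hm
    obtain ⟨m, rfl⟩ := Nat.exists_eq_add_of_le' hm
    calc |x (m + k)| ≤ ∑ j ∈ range k, |w j * x (m + k - 1 - j)| := by
          rw [hx]; exact abs_sum_le_sum_abs _ _
      _ ≤ ∑ j ∈ range k, w j * c := by
          refine sum_le_sum fun j hj => ?_
          rw [mem_range] at hj
          rw [abs_mul, abs_of_nonneg (hw j)]
          exact mul_le_mul_of_nonneg_left (ih _ (by omega)) (hw j)
      _ = c := by rw [← sum_mul, hsum, one_mul]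

namespace IsDominantRoot

theorem sum_weights (h : IsDominantRoot k α) : ∑ j ∈ range k, (2 - α) * α ^ j = 1 := by
  rw [← mul_sum, ← h.pow_eq_geom_sum, mul_comm, h.pow_mul]

theorem sum_window_genLucas (h : IsDominantRoot k α) (hk : 2 ≤ k) (m : ℕ) :
    ∑ j ∈ range k, (2 - α) * α ^ j * (genLucas k (m + k - 1 - j) : ℝ) =
      genLucas k (m + k) - (2 * α - 1) * (α - 1) * α ^ m := by
  have hwin := sub_sum_window_eq_pow_mul (x := fun m => (genLucas k m : ℝ)) (by omega) h.pow_mul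
    (fun m => by exact_mod_cast genLucas_add_succ hk m) m
  rw [sum_range_mul_genLucas_initial hk fun j => (2 - α) * α ^ j, genLucas_self hk] at hwin
  push_cast at hwin
  linear_combination -hwin

theorem sum_window_pow (h : IsDominantRoot k α) (m : ℕ) :
    ∑ j ∈ range k, (2 - α) * α ^ j * ((2 - α) * α ^ (m + k - 1 - j + 1)) =
      (2 - α) * α ^ (m + k + 1) - ((k + 1) * α - 2 * k) * α ^ m := by
  have hterm : ∀ j ∈ range k, (2 - α) * α ^ j * ((2 - α) * α ^ (m + k - 1 - j + 1)) =
      (2 - α) * α ^ m := fun j hj => by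
    rw [mem_range] at hj
    have hpow : α ^ j * α ^ (m + k - 1 - j + 1) = α ^ m * α ^ k := by
      rw [← pow_add, ← pow_add]; congr 1; omega
    linear_combination (2 - α) ^ 2 * hpow + (2 - α) * α ^ m * h.pow_mul
  rw [sum_congr rfl hterm, sum_const, card_range, nsmul_eq_mul, add_right_comm, pow_add]
  linear_combination -α ^ (m + 1) * h.pow_mul

/- The error term is a weighted mean of its `k` predecessors, so it never exceeds its initial
values. -/
theorem abs_genLucas_sub_le (h : IsDominantRoot k α) (hk : 4 ≤ k) (m : ℕ) :
    |((k + 1) * α - 2 * k) * (genLucas k m : ℝ) -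
      (2 * α - 1) * (α - 1) * ((2 - α) * α ^ (m + 1))| ≤ 4 := by
  have hα := h.lower
  have h2α : 0 ≤ 2 - α := by linarith [h.lt_two]
  have hden := h.one_le_den hk
  have hnum := h.one_le_num
  refine abs_le_of_eq_weighted_sum (k := k) (x := fun m => ((k + 1) * α - 2 * k) *
    (genLucas k m : ℝ) - (2 * α - 1) * (α - 1) * ((2 - α) * α ^ (m + 1)))
    (w := fun j => (2 - α) * α ^ j) (fun j => by positivity) h.sum_weights
    (fun m hm => ?_) (fun m => ?_) m
  · have hpow : (2 - α) * α ^ (m + 1) ≤ 1 := by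
      rw [← h.pow_mul, mul_comm]
      gcongr
      · linarith
      · exact hm
    have hgen : (0 : ℝ) ≤ genLucas k m ∧ (genLucas k m : ℝ) ≤ 2 := by
      rcases (by omega : m < k - 2 ∨ m = k - 2 ∨ m = k - 1) with hm | rfl | rfl
      · norm_num [genLucas_of_lt hm]
      · norm_num [genLucas_sub_two]
      · norm_num [genLucas_sub_one (by omega : 2 ≤ k)]
    refine abs_sub_le_of_nonneg_of_le (by nlinarith) ?_ (by positivity) ?_
    · nlinarith [h.den_le_two]
    · nlinarith [h.num_le_three]
  · trans ((k + 1) * α - 2 * k) *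
        ∑ j ∈ range k, (2 - α) * α ^ j * (genLucas k (m + k - 1 - j) : ℝ) -
      (2 * α - 1) * (α - 1) *
        ∑ j ∈ range k, (2 - α) * α ^ j * ((2 - α) * α ^ (m + k - 1 - j + 1))
    · rw [h.sum_window_genLucas (by omega), h.sum_window_pow]
      ring
    · rw [mul_sum, mul_sum, ← sum_sub_distrib]
      exact sum_congr rfl fun _ _ => by ring

theorem abs_lucasL_sub_le (h : IsDominantRoot k α) (hk : 4 ≤ k) {n : ℕ} (hn : 1 ≤ n) :
    |((k + 1) * α - 2 * k) * (lucasL k n : ℝ) - (2 * α - 1) * (α - 1) * α ^ (n - 1)| ≤ 4 := by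
  have hpow : α ^ (n - 1) = (2 - α) * α ^ (n + k - 2 + 1) := by
    rw [show n + k - 2 + 1 = n - 1 + k by omega, pow_add]
    linear_combination -α ^ (n - 1) * h.pow_mul
  rw [hpow]
  exact h.abs_genLucas_sub_le hk (n + k - 2)

end IsDominantRoot

end BinetFormula

section DominantRootField

variable {k : ℕ} {α : ℝ}

open IntermediateField in
theorem exists_numberField_root {P : ℤ[X]} (hP : P.Monic) (hα : aeval α P = 0) :
    ∃ (K : Type) (_ : Field K) (_ : NumberField K) (φ : K →+* ℝ) (g : K),
      φ g = α ∧ Module.finrank ℚ K ≤ P.natDegree ∧ aeval g P = 0 := by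
  have hint : IsIntegral ℚ α := IsIntegral.tower_top ⟨P, hP, hα⟩
  have : FiniteDimensional ℚ ℚ⟮α⟯ := adjoin.finiteDimensional hint
  refine ⟨ℚ⟮α⟯, inferInstance, ⟨⟩, algebraMap ℚ⟮α⟯ ℝ, AdjoinSimple.gen ℚ α,
    AdjoinSimple.algebraMap_gen ℚ α, ?_, ?_⟩
  · rw [adjoin.finrank hint, ← hP.natDegree_map (algebraMap ℤ ℚ)]
    exact natDegree_le_natDegree (minpoly.min ℚ α (hP.map _) (by rwa [aeval_map_algebraMap]))
  · apply (algebraMap ℚ⟮α⟯ ℝ).injective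
    rw [map_zero, ← aeval_algebraMap_apply, AdjoinSimple.algebraMap_gen, hα]

theorem degree_geom_sum_lt (k : ℕ) : (∑ i ∈ range k, (X : ℤ[X]) ^ i).degree < k :=
  (degree_sum_le _ _).trans_lt <| (Finset.sup_lt_iff (WithBot.bot_lt_coe k)).2 fun i hi => by
    rw [degree_X_pow]
    exact Nat.cast_lt.2 (mem_range.1 hi)

theorem norm_le_two_of_pow_eq_geom_sum {z : ℂ} (hz : z ^ k = ∑ i ∈ range k, z ^ i) : ‖z‖ ≤ 2 := by
  by_contra! hlt
  have hnorm : ‖z‖ ^ k ≤ ∑ i ∈ range k, ‖z‖ ^ i := by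
    rw [← norm_pow, hz]
    simpa only [norm_pow] using norm_sum_le (range k) fun i => z ^ i
  rw [geom_sum_eq (by linarith), le_div_iff₀ (by linarith)] at hnorm
  nlinarith [pow_pos (zero_lt_two.trans hlt) k]

theorem isIntegral_of_pow_eq_geom_sum {R : Type*} [CommRing R] {x : R}
    (hx : x ^ k = ∑ i ∈ range k, x ^ i) : IsIntegral ℤ x :=
  ⟨X ^ k - ∑ i ∈ range k, X ^ i, monic_X_pow_sub (degree_geom_sum_lt k), by
    simp [eval₂_finsetSum, hx]⟩

theorem eq_one_of_isIntegral_inv {m : ℕ} (hm : m ≠ 0) (h : IsIntegral ℤ (m : ℝ)⁻¹) : m = 1 := by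
  have hQ : IsIntegral ℤ (m : ℚ)⁻¹ := by
    rw [← isIntegral_algebraMap_iff (B := ℝ) (algebraMap ℚ ℝ).injective]
    simpa using h
  obtain ⟨z, hz⟩ := IsIntegrallyClosed.isIntegral_iff.1 hQ
  have hz1 : z * m = 1 := by
    have : (z : ℚ) * m = 1 := by
      rw [← eq_intCast (algebraMap ℤ ℚ), hz, inv_mul_cancel₀ (by exact_mod_cast hm)]
    exact_mod_cast this
  exact_mod_cast Int.eq_one_of_mul_eq_one_left m.cast_nonneg hz1

namespace IsDominantRoot

open NumberField in
theorem exists_numberField (h : IsDominantRoot k α) :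
    ∃ (K : Type) (_ : Field K) (_ : NumberField K) (φ : K →+* ℝ) (g : K),
      φ g = α ∧ Module.finrank ℚ K ≤ k ∧ IsIntegral ℤ g ∧ house g ≤ 2 := by
  obtain ⟨K, _, _, φ, g, hg, hrank, hroot⟩ := exists_numberField_root (α := α)
    (monic_X_pow_sub (degree_geom_sum_lt k)) (by simp [h.pow_eq_geom_sum])
  have hpow : g ^ k = ∑ i ∈ range k, g ^ i := by simpa [sub_eq_zero] using hroot
  refine ⟨K, _, _, φ, g, hg, hrank.trans_eq ?_, isIntegral_of_pow_eq_geom_sum hpow,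
    house_le_iff.2 fun σ => norm_le_two_of_pow_eq_geom_sum (k := k) ?_⟩
  · refine natDegree_eq_of_degree_eq_some ?_
    rw [degree_sub_eq_left_of_degree_lt] <;> rw [degree_X_pow]
    exact degree_geom_sum_lt k
  · simpa using congrArg σ hpow

/- `α` is a unit, so a power of ten that is a power of `α` has an integral inverse. -/
theorem pow_ne_ten_pow (h : IsDominantRoot k α) (hk : 1 ≤ k) {p : ℕ} (hp : 1 ≤ p) (q : ℕ) :
    α ^ p ≠ 10 ^ q := by
  intro hpq
  have hα : 1 < α := by linarith [h.lower]
  have hint := isIntegral_of_pow_eq_geom_sum h.pow_eq_geom_sum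
  have hinv : α⁻¹ = α ^ (k - 1) * (2 - α) := by
    refine inv_eq_of_mul_eq_one_right ?_
    rw [← mul_assoc, mul_pow_sub_one (by omega), h.pow_mul]
  have hinvInt : IsIntegral ℤ α⁻¹ := by
    rw [hinv]
    exact (hint.pow _).mul (IsIntegral.sub (isIntegral_natCast 2) hint)
  have hten : (10 : ℕ) ^ q = 1 := by
    refine eq_one_of_isIntegral_inv (by positivity) ?_
    push_cast
    rw [← hpq, ← inv_pow]
    exact hinvInt.pow p
  have := one_lt_pow₀ hα (by omega : p ≠ 0)
  rw [hpq] at this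
  exact this.ne' (by exact_mod_cast hten)

end IsDominantRoot

end DominantRootField

section SimultaneousApproximation

theorem exists_nat_abs_mul_sub_mul_le {d n Q : ℕ} (hQ : 0 < Q) (hn : 0 < n) :
    ∃ p q : ℕ, 1 ≤ p ∧ p ≤ Q ∧ |(d : ℝ) * p - n * q| ≤ n / (Q + 1) := by
  obtain ⟨q, p, hp, hpQ, hpq⟩ := Real.exists_int_int_abs_mul_sub_le ((d : ℝ) / n) hQ
  have hnR : (0 : ℝ) < n := by exact_mod_cast hn
  have hQR : (0 : ℝ) < Q := by exact_mod_cast hQ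
  lift p to ℕ using hp.le
  rw [Int.cast_natCast, mul_comm] at hpq
  have hq : -1 < q := by
    have h0 : (0 : ℝ) ≤ d / n * p := by positivity
    have h1 : 1 / ((Q : ℝ) + 1) < 1 := by rw [div_lt_one (by positivity)]; linarith
    have : (-1 : ℝ) < q := by linarith [(abs_le.1 hpq).2]
    exact_mod_cast this
  lift q to ℕ using by omega
  refine ⟨p, q, by exact_mod_cast hp, by exact_mod_cast hpQ, ?_⟩
  rw [Int.cast_natCast] at hpq
  calc |(d : ℝ) * p - n * q| = n * |(d : ℝ) / n * p - q| := by
        rw [← abs_of_pos hnR, ← abs_mul, abs_of_pos hnR]; congr 1; field_simp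
    _ ≤ n * (1 / (Q + 1)) := by gcongr
    _ = n / (Q + 1) := by ring

theorem le_div_three_add_half {d n p q Q : ℕ} (hQ : 0 < Q) (hn : 0 < n) (hd : 3 * d ≤ n)
    (hpq : |(d : ℝ) * p - n * q| ≤ n / (Q + 1)) : (q : ℝ) ≤ p / 3 + 1 / 2 := by
  have hnR : (0 : ℝ) < n := by exact_mod_cast hn
  have hQR : (1 : ℝ) ≤ Q := by exact_mod_cast hQ
  have hdR : 3 * (d : ℝ) ≤ n := by exact_mod_cast hd
  refine le_of_mul_le_mul_left ?_ hnR
  calc (n : ℝ) * q ≤ d * p + n / (Q + 1) := by linarith [(abs_le.1 hpq).1]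
    _ ≤ n / 3 * p + n / 2 := by
        gcongr
        · linarith
        · linarith
    _ = n * (p / 3 + 1 / 2) := by ring

theorem exists_nat_abs_sub_div_mul_le {d n Q : ℕ} (hQ : 0 < Q) (hn : 0 < n) (hd : 3 * d ≤ n) :
    ∃ p q : ℕ, 1 ≤ p ∧ p ≤ Q ∧ 3 * q ≤ 2 * p ∧
      |(d : ℝ) - (n / p : ℕ) * q| ≤ n / (p * Q) + p := by
  obtain ⟨p, q, hp, hpQ, hpq⟩ := exists_nat_abs_mul_sub_mul_le (d := d) hQ hn
  have hq : 6 * q ≤ 2 * p + 3 := by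
    have : 6 * (q : ℝ) ≤ 2 * p + 3 := by linarith [le_div_three_add_half hQ hn hd hpq]
    exact_mod_cast this
  refine ⟨p, q, hp, hpQ, by omega, ?_⟩
  have hpR : (1 : ℝ) ≤ p := by exact_mod_cast hp
  have hmod : (n % p) * q ≤ p * p := Nat.mul_le_mul (Nat.mod_lt _ hp).le (by omega)
  have hdiv : (n : ℝ) = p * (n / p : ℕ) + (n % p : ℕ) := by
    exact_mod_cast (Nat.div_add_mod n p).symm
  refine le_of_mul_le_mul_left ?_ (zero_lt_one.trans_le hpR)
  calc p * |(d : ℝ) - (n / p : ℕ) * q| = |((d : ℝ) * p - n * q) + (n % p : ℕ) * q| := by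
        rw [← Nat.abs_cast (R := ℝ) p, ← abs_mul, Nat.abs_cast]
        congr 1
        linear_combination (q : ℝ) * hdiv
    _ ≤ n / (Q + 1) + p * p := by
        refine (abs_add_le _ _).trans (add_le_add hpq ?_)
        rw [abs_of_nonneg (by positivity)]
        exact_mod_cast hmod
    _ ≤ n / Q + p * p := by gcongr; linarith
    _ = p * (n / (p * Q) + p) := by field_simp

end SimultaneousApproximation

section ThreeLogarithms

open NumberField

theorem two_pow_le_exp (n : ℕ) : (2 : ℝ) ^ n ≤ Real.exp n := by
  rw [← Real.exp_one_pow]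
  gcongr
  linarith [Real.add_one_le_exp 1]

theorem ten_pow_le_exp (n : ℕ) : (10 : ℝ) ^ n ≤ Real.exp (3 * n) := by
  rw [mul_comm, Real.exp_nat_mul]
  gcongr
  rw [← Real.log_le_iff_le_exp (by norm_num), Real.log_ten_eq]
  linarith [Real.log_two_lt_d9, Real.log_five_lt_d9]

theorem mul_le_exp {w : ℝ} (hw : 968 ≤ w) : 802 * w ≤ Real.exp w := by
  have hsq : (968 : ℝ) ^ 2 ≤ w ^ 2 := by gcongr
  calc 802 * w ≤ w ^ 3 / Nat.factorial 3 := by norm_num [Nat.factorial]; nlinarith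
    _ ≤ Real.exp w := Real.pow_div_factorial_le_exp w (by linarith) 3

variable {K : Type*} [Field K] {φ : K →+* ℝ} {g : K} {k w h M : ℕ}

theorem isIntegral_num (hg : IsIntegral ℤ g) (M k s : ℕ) :
    IsIntegral ℤ (M * ((k + 1) * g - 2 * k) * 10 ^ s) := by
  have hcast (m : ℕ) : IsIntegral ℤ (m : K) := isIntegral_natCast m
  have h2 := hcast 2
  have h10 := hcast 10
  push_cast at h2 h10
  exact (((hcast M).mul ((((hcast k).add isIntegral_one).mul hg).sub
    (h2.mul (hcast k)))).mul (h10.pow s))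

theorem isIntegral_den (hg : IsIntegral ℤ g) (r s : ℕ) :
    IsIntegral ℤ (9 * ((2 * g - 1) * (g - 1)) * g ^ r * 10 ^ s) := by
  have h2 : IsIntegral ℤ ((2 : ℕ) : K) := isIntegral_natCast 2
  have h9 : IsIntegral ℤ ((9 : ℕ) : K) := isIntegral_natCast 9
  have h10 : IsIntegral ℤ ((10 : ℕ) : K) := isIntegral_natCast 10
  push_cast at h2 h9 h10
  exact ((h9.mul (((h2.mul hg).sub isIntegral_one).mul (hg.sub isIntegral_one))).mul
    (hg.pow r)).mul (h10.pow s)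

variable [NumberField K]

theorem house_natCast (m : ℕ) : house (m : K) = m := by
  simpa using house_intCast (K := K) m

theorem house_num_le (hg : house g ≤ 2) (hM : M ≤ Real.exp h) (hw : 968 ≤ w) (hk : k ≤ 200 * w)
    (s : ℕ) : house (M * ((k + 1) * g - 2 * k) * 10 ^ s) ≤ Real.exp (h + w + 3 * s) := by
  have hwR : (968 : ℝ) ≤ w := by exact_mod_cast hw
  have hkR : (k : ℝ) ≤ 200 * w := by exact_mod_cast hk
  refine house_le_iff.2 fun σ => ?_
  have hz : ‖σ g‖ ≤ 2 := house_le_iff.1 hg σ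
  have hlin : ‖((k : ℂ) + 1) * σ g - 2 * k‖ ≤ Real.exp w := by
    calc ‖((k : ℂ) + 1) * σ g - 2 * k‖ ≤ (k + 1) * ‖σ g‖ + 2 * k := by
          refine (norm_sub_le _ _).trans_eq ?_
          rw [← Nat.cast_succ, ← Nat.cast_succ, norm_mul, norm_mul, Complex.norm_natCast,
            Complex.norm_natCast, Complex.norm_ofNat]
      _ ≤ (k + 1) * 2 + 2 * k := by gcongr
      _ ≤ 802 * w := by linarith
      _ ≤ Real.exp w := mul_le_exp hwR
  calc ‖σ (M * ((k + 1) * g - 2 * k) * 10 ^ s)‖ =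
        M * ‖((k : ℂ) + 1) * σ g - 2 * k‖ * 10 ^ s := by simp [map_ofNat]
    _ ≤ Real.exp h * Real.exp w * Real.exp (3 * s) := by gcongr; exact ten_pow_le_exp s
    _ = Real.exp (h + w + 3 * s) := by rw [Real.exp_add, Real.exp_add]

theorem house_den_le (hg : house g ≤ 2) (r s : ℕ) :
    house (9 * ((2 * g - 1) * (g - 1)) * g ^ r * 10 ^ s) ≤ Real.exp (9 + r + 3 * s) := by
  refine house_le_iff.2 fun σ => ?_
  have hz : ‖σ g‖ ≤ 2 := house_le_iff.1 hg σ
  have h₁ : ‖2 * σ g - 1‖ ≤ 5 := by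
    refine (norm_sub_le _ _).trans ?_
    rw [norm_mul, Complex.norm_ofNat, norm_one]
    linarith
  have h₂ : ‖σ g - 1‖ ≤ 3 := by
    refine (norm_sub_le _ _).trans ?_
    rw [norm_one]
    linarith
  calc ‖σ (9 * ((2 * g - 1) * (g - 1)) * g ^ r * 10 ^ s)‖ =
        9 * (‖2 * σ g - 1‖ * ‖σ g - 1‖) * ‖σ g‖ ^ r * 10 ^ s := by simp [map_ofNat]
    _ ≤ 9 * (5 * 3) * 2 ^ r * 10 ^ s := by gcongr
    _ ≤ Real.exp 9 * Real.exp r * Real.exp (3 * s) := by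
        gcongr
        · exact le_trans (b := 2 ^ 9) (by norm_num) (by simpa using two_pow_le_exp 9)
        · exact two_pow_le_exp r
        · exact ten_pow_le_exp s
    _ = Real.exp (9 + r + 3 * s) := by rw [Real.exp_add, Real.exp_add]

theorem abs_le_of_eq_exp_mul {x y t H : ℝ} (hxy : x = Real.exp t * y) (hx : 1 ≤ x) (hy : 1 ≤ y)
    (hxH : x ≤ Real.exp H) (hyH : y ≤ Real.exp H) : |t| ≤ H := by
  have ht : t = Real.log x - Real.log y := by
    rw [hxy, Real.log_mul (Real.exp_ne_zero t) (by linarith), Real.log_exp, add_sub_cancel_right]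
  have hlogx := (Real.log_le_iff_le_exp (by linarith)).2 hxH
  have hlogy := (Real.log_le_iff_le_exp (by linarith)).2 hyH
  rw [ht, abs_le]
  constructor <;> linarith [Real.log_nonneg hx, Real.log_nonneg hy]

theorem hasHeightLE_of_mul_ten_pow_eq {x : ℝ} {p q : ℕ} (hint : IsIntegral ℤ g)
    (hg : house g ≤ 2) (hq : 3 * q ≤ 2 * p) (hx : φ g ^ p = x * 10 ^ q) :
    HasHeightLE φ x (2 * p) := by
  have h10 : IsIntegral ℤ ((10 ^ q : ℕ) : K) := isIntegral_natCast _
  refine ⟨g ^ p, (10 ^ q : ℕ), hint.pow p, h10, ?_, ?_,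
    Nat.cast_ne_zero.2 (by positivity), by simpa [map_ofNat] using hx⟩
  · calc house (g ^ p) ≤ house g ^ p := house_pow_le g p
      _ ≤ 2 ^ p := by gcongr; exact house_nonneg g
      _ ≤ Real.exp p := two_pow_le_exp p
      _ ≤ Real.exp (2 * p) := by gcongr; linarith [p.cast_nonneg (α := ℝ)]
  · rw [house_natCast]
    push_cast
    refine (ten_pow_le_exp q).trans ?_
    exact Real.exp_le_exp.2 (by exact_mod_cast hq)

theorem hasHeightLE_and_abs_le {t H : ℝ} {r s₁ s₂ : ℕ} (hint : IsIntegral ℤ g)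
    (hg : house g ≤ 2) (hα : IsDominantRoot k (φ g)) (hk : 4 ≤ k) (hM : 1 ≤ M)
    (hMh : M ≤ Real.exp h) (hw : 968 ≤ w) (hkw : k ≤ 200 * w)
    (hH : (h + w + 3 * s₁ : ℝ) ≤ H) (hH' : (9 + r + 3 * s₂ : ℝ) ≤ H)
    (ht : M * ((k + 1) * φ g - 2 * k) * 10 ^ s₁ =
      Real.exp t * (9 * ((2 * φ g - 1) * (φ g - 1)) * φ g ^ r * 10 ^ s₂)) :
    HasHeightLE φ (Real.exp t) H ∧ |t| ≤ H := by
  have hα1 : 1 ≤ φ g := by linarith [hα.lower]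
  have hnum := (house_num_le hg hMh hw hkw s₁).trans (Real.exp_le_exp.2 hH)
  have hden := (house_den_le hg r s₂).trans (Real.exp_le_exp.2 hH')
  have hnumR := (le_abs_self _).trans ((abs_le_house φ _).trans hnum)
  have hdenR := (le_abs_self _).trans ((abs_le_house φ _).trans hden)
  simp only [map_mul, map_sub, map_add, map_pow, map_natCast, map_one, map_ofNat] at hnumR hdenR
  have hden1 : 1 ≤ 9 * ((2 * φ g - 1) * (φ g - 1)) * φ g ^ r * 10 ^ s₂ :=
    one_le_mul_of_one_le_of_one_le (one_le_mul_of_one_le_of_one_le (by linarith [hα.one_le_num])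
      (one_le_pow₀ hα1)) (one_le_pow₀ (by norm_num))
  have hnum1 : 1 ≤ M * ((k + 1) * φ g - 2 * k) * 10 ^ s₁ :=
    one_le_mul_of_one_le_of_one_le (one_le_mul_of_one_le_of_one_le (by exact_mod_cast hM)
      (hα.one_le_den hk)) (one_le_pow₀ (by norm_num))
  refine ⟨⟨_, _, isIntegral_num hint M k s₁, isIntegral_den hint r s₂, hnum, hden, fun h0 => ?_,
    ?_⟩, abs_le_of_eq_exp_mul ht hnum1 hden1 hnumR hdenR⟩
  · have := congrArg φ h0
    simp only [map_mul, map_sub, map_pow, map_one, map_ofNat, map_zero] at this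
    linarith
  · simpa only [map_mul, map_sub, map_add, map_pow, map_natCast, map_one, map_ofNat] using ht

theorem cast_tsub_add_cast_tsub (a b : ℕ) :
    ((a - b : ℕ) : ℝ) + (b - a : ℕ) = |(a : ℝ) - b| := by
  rcases le_total a b with hab | hab
  · have : (a : ℝ) ≤ b := by exact_mod_cast hab
    rw [Nat.sub_eq_zero_of_le hab, Nat.cast_sub hab, abs_of_nonpos (by linarith)]
    simp
  · have : (b : ℝ) ≤ a := by exact_mod_cast hab
    rw [Nat.sub_eq_zero_of_le hab, Nat.cast_sub hab, abs_of_nonneg (by linarith)]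
    simp

theorem mul_ten_pow_eq_exp_add_mul {x y α l Λ : ℝ} {d n p q N r s₁ s₂ : ℕ}
    (hl : α ^ p = Real.exp l * 10 ^ q) (hΛ : x * 10 ^ d = Real.exp Λ * (y * α ^ n))
    (hn : p * N + r = n) (hd : d + s₂ = s₁ + N * q) :
    x * 10 ^ s₁ = Real.exp (Λ + N * l) * (y * α ^ r * 10 ^ s₂) := by
  have hten : (10 : ℝ) ^ (N * q) ≠ 0 := by positivity
  refine mul_right_cancel₀ hten ?_
  calc x * 10 ^ s₁ * 10 ^ (N * q) = x * 10 ^ (d + s₂) := by rw [hd, pow_add, mul_assoc]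
    _ = x * 10 ^ d * 10 ^ s₂ := by rw [pow_add, mul_assoc]
    _ = Real.exp Λ * (y * ((α ^ p) ^ N * α ^ r)) * 10 ^ s₂ := by rw [hΛ, ← hn, pow_add, pow_mul]
    _ = Real.exp (Λ + N * l) * (y * α ^ r * 10 ^ s₂) * 10 ^ (N * q) := by
      rw [hl, mul_pow, ← Real.exp_nat_mul, Real.exp_add, ← pow_mul, mul_comm q N]
      ring

theorem mul_le_div_of_le {T Q c n p H : ℕ} (hp : 1 ≤ p) (hpQ : p ≤ Q) (hQ : 6 * T ≤ Q)
    (hn : (T * (c + 6 * Q) + 1) * (2 * Q) ≤ n)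
    (hH : (H : ℝ) ≤ c + 4 * Q + 3 * (n / (p * Q))) : T * H ≤ n / p := by
  have hp0 : (p : ℝ) ≠ 0 := Nat.cast_ne_zero.2 (by omega)
  have hQR : (1 : ℝ) ≤ Q := by exact_mod_cast hp.trans hpQ
  have hpQR : (p : ℝ) ≤ Q := by exact_mod_cast hpQ
  have hTQ : 6 * (T : ℝ) ≤ Q := by exact_mod_cast hQ
  have hnR : ((T : ℝ) * (c + 6 * Q) + 1) * (2 * Q) ≤ n := by exact_mod_cast hn
  rw [Nat.le_div_iff_mul_le hp, ← Nat.cast_le (α := ℝ)]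
  push_cast
  calc (T : ℝ) * H * p ≤ T * (c + 4 * Q + 3 * (n / (p * Q))) * p := by gcongr
    _ = T * (c + 4 * Q) * p + 6 * T * (n / Q) / 2 := by field_simp [hp0]; ring
    _ ≤ T * (c + 6 * Q) * Q + Q * (n / Q) / 2 := by gcongr; norm_num
    _ = T * (c + 6 * Q) * Q + n / 2 := by field_simp
    _ ≤ n := by linarith

theorem two_mul_mul_le_add {Q p H : ℕ} {c n : ℝ} (hc : 0 ≤ c) (hp : 1 ≤ p) (hpQ : p ≤ Q)
    (hH : (H : ℝ) ≤ c + 4 * Q + 3 * (n / (p * Q))) :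
    2 * p * H ≤ 2 * Q * (c + 6 * Q) + 6 * (n / Q) := by
  have hp0 : (p : ℝ) ≠ 0 := Nat.cast_ne_zero.2 (by omega)
  calc 2 * (p : ℝ) * H ≤ 2 * p * (c + 4 * Q + 3 * (n / (p * Q))) := by gcongr
    _ = 2 * p * (c + 4 * Q) + 6 * (n / Q) := by field_simp [hp0]; ring
    _ ≤ 2 * Q * (c + 6 * Q) + 6 * (n / Q) := by gcongr; norm_num

theorem IsDominantRoot.exists_pow_eq_exp_mul_ten_pow {k p : ℕ} {α : ℝ} (hα : IsDominantRoot k α)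
    (hk : 1 ≤ k) (hp : 1 ≤ p) (q : ℕ) : ∃ l ≠ 0, α ^ p = Real.exp l * 10 ^ q := by
  have hα0 : 0 < α := by linarith [hα.lower]
  have hne : α ^ p / 10 ^ q ≠ 1 := by
    rw [Ne, div_eq_one_iff_eq (by positivity)]
    exact hα.pow_ne_ten_pow hk hp q
  have hpos : 0 < α ^ p / 10 ^ q := by positivity
  refine ⟨Real.log (α ^ p / 10 ^ q), Real.log_ne_zero_of_pos_of_ne_one hpos hne, ?_⟩
  rw [Real.exp_log hpos, div_mul_cancel₀ _ (by positivity)]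

/- Dirichlet's theorem gives `p, q` with `q / p` close to `d / n`. Writing `n = p * N + r`, the
three logarithms of `α`, `10` and the coefficient collapse to the two real numbers
`l = p * log α - q * log 10` and `Λ + N * l`, both of which are logarithms of numbers of small
height. -/
theorem IsDominantRoot.exp_neg_le_abs {k M d n Q w h : ℕ} {α Λ : ℝ} (hα : IsDominantRoot k α)
    (hk : 471 ≤ k) (hM : 1 ≤ M) (hMh : M ≤ Real.exp h) (hw : 968 ≤ w) (hkw : k ≤ 200 * w)
    (hn : 1 ≤ n) (hnw : n ≤ 2 ^ w) (hd : 3 * d ≤ n) (hQ : 24 * (k ^ 2 * w) ≤ Q)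
    (hQn : (4 * (k ^ 2 * w) * (h + w + 13 + 6 * Q) + 1) * (2 * Q) ≤ n) (hΛ1 : |Λ| ≤ 1)
    (hΛ : M * ((k + 1) * α - 2 * k) * 10 ^ d =
      Real.exp Λ * (9 * ((2 * α - 1) * (α - 1)) * α ^ n)) :
    Real.exp (-(49 * ((k ^ 2 * w) ^ 2 * (2 * Q * (h + w + 13 + 6 * Q) + 6 * (n / Q))))) ≤ |Λ| := by
  have hQ1 : 1 ≤ Q := (Nat.one_le_iff_ne_zero.2 (by positivity)).trans hQ
  obtain ⟨p, q, hp, hpQ, hqp, hs⟩ := exists_nat_abs_sub_div_mul_le (Q := Q) hQ1 hn hd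
  obtain ⟨K, _, _, φ, g, rfl, hrank, hint, hg⟩ := hα.exists_numberField
  obtain ⟨l, hl0, hl⟩ := hα.exists_pow_eq_exp_mul_ten_pow (by omega) hp q
  set N := n / p
  set r := n % p
  have hrp : (r : ℝ) ≤ p := by exact_mod_cast (Nat.mod_lt n hp).le
  have hpNr : p * N + r = n := Nat.div_add_mod n p
  have hdN : d + (N * q - d) = d - N * q + N * q := by omega
  set s₁ := d - N * q
  set s₂ := N * q - d
  have hsum : ((s₁ : ℝ) + s₂) = |(d : ℝ) - N * q| := by exact_mod_cast cast_tsub_add_cast_tsub d _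
  set H := h + w + 3 * (s₁ + s₂) + p + 10 with hH
  have hHR : (H : ℝ) = h + w + 3 * (s₁ + s₂) + p + 10 := by rw [hH]; push_cast; ring
  have hHle : (H : ℝ) ≤ (h + w + 13 : ℕ) + 4 * Q + 3 * (n / (p * Q)) := by
    have : (p : ℝ) ≤ Q := by exact_mod_cast hpQ
    push_cast
    linarith
  have hpos (m : ℕ) : (0 : ℝ) ≤ m := m.cast_nonneg
  obtain ⟨hheight, ht⟩ := hasHeightLE_and_abs_le (H := H - 1) (r := r) (s₁ := s₁) (s₂ := s₂)
    hint hg hα (by omega) hM hMh hw hkw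
    (by linarith [hpos s₂, hpos p]) (by linarith [hpos h, hpos w, hpos s₁])
    (mul_ten_pow_eq_exp_add_mul hl hΛ hpNr hdN)
  refine le_trans (Real.exp_le_exp.2 (neg_le_neg ?_))
    (exp_neg_le_abs_of_hasHeightLE (w := w) (H₁ := 2 * p) (H₂ := H) (N := N) hk hw hkw (by omega)
      (by omega) hrank hl0 (by simpa using hasHeightLE_of_mul_ten_pow_eq hint hg hqp hl)
      (hheight.mono (by linarith)) ?_ ?_ ?_)
  · push_cast
    rw [mul_assoc _ (2 * (p : ℝ)), mul_pow, ← _root_.pow_mul _ 2 2]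
    gcongr
    exact_mod_cast two_mul_mul_le_add (by positivity) hp hpQ hHle
  · calc 2 * p * N ≤ 2 * n := by rw [mul_assoc]; omega
      _ ≤ 2 * 2 ^ w := by omega
  · rw [mul_assoc 4 (k ^ 2)]
    exact mul_le_div_of_le hp hpQ (by linarith) hQn hHle
  · calc |l| * N = |N * l| := by rw [abs_mul, Nat.abs_cast, mul_comm]
      _ = |Λ + N * l - Λ| := by ring_nf
      _ ≤ H - 1 + 1 := (abs_sub _ _).trans (add_le_add ht hΛ1)
      _ = H := by ring

end ThreeLogarithms

section Digits

/-- The almost repdigits of the paper: `L` has `d₁` decimal digits, all equal to `a` except for the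
digit `b` at the place of `10 ^ d₂`. -/
structure IsAlmostRepdigit (L a b : ℤ) (d₁ d₂ : ℕ) : Prop where
  lt : d₂ < d₁
  one_le_a : 1 ≤ a
  a_le_nine : a ≤ 9
  b_nonneg : 0 ≤ b
  b_le_nine : b ≤ 9
  eq : L = a * ((10 ^ d₁ - 1) / 9) + (b - a) * 10 ^ d₂

namespace IsAlmostRepdigit

variable {L a b : ℤ} {d₁ d₂ : ℕ}

theorem nine_mul (h : IsAlmostRepdigit L a b d₁ d₂) :
    9 * L = a * 10 ^ d₁ + 9 * (b - a) * 10 ^ d₂ - a := by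
  have hdvd : (9 : ℤ) ∣ 10 ^ d₁ - 1 := by simpa using sub_one_dvd_pow_sub_one (10 : ℤ) d₁
  linear_combination 9 * h.eq + a * Int.mul_ediv_cancel' hdvd

theorem ten_mul_ten_pow_le (h : IsAlmostRepdigit L a b d₁ d₂) : (10 : ℤ) * 10 ^ d₂ ≤ 10 ^ d₁ := by
  rw [← pow_succ']
  exact pow_le_pow_right₀ (by norm_num) h.lt

theorem ten_pow_le (h : IsAlmostRepdigit L a b d₁ d₂) : 10 ^ d₁ ≤ 90 * L + 10 := by
  have hpow : (1 : ℤ) ≤ 10 ^ d₂ := one_le_pow₀ (by norm_num)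
  have hb : 0 ≤ b * (10 : ℤ) ^ d₂ := mul_nonneg h.b_nonneg (by positivity)
  have ha : (a - 1) * 10 ≤ (a - 1) * (10 : ℤ) ^ d₁ := by
    gcongr
    · linarith [h.one_le_a]
    · linarith [h.ten_mul_ten_pow_le]
  have hlt : a * (10 * 10 ^ d₂) ≤ a * (10 : ℤ) ^ d₁ := by
    gcongr
    · linarith [h.one_le_a]
    · exact h.ten_mul_ten_pow_le
  linarith [h.nine_mul]

theorem lt_ten_pow (h : IsAlmostRepdigit L a b d₁ d₂) : L < 10 ^ d₁ := by
  have hpow : (0 : ℤ) < 10 ^ d₂ := by positivity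
  have hb : b * (10 : ℤ) ^ d₂ ≤ 9 * 10 ^ d₂ := by gcongr; exact h.b_le_nine
  have ha : 0 ≤ (9 - a) * ((10 : ℤ) ^ d₁ - 9 * 10 ^ d₂) :=
    mul_nonneg (by linarith [h.a_le_nine]) (by linarith [h.ten_mul_ten_pow_le])
  linarith [h.nine_mul, h.one_le_a]

theorem not_256_dvd (h : IsAlmostRepdigit L a b d₁ d₂) :
    ¬ (256 : ℤ) ∣ 9 * (b - a) * 10 ^ d₂ - a := by
  obtain ⟨-, ha₁, ha₉, hb₀, hb₉, -⟩ := h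
  rcases Nat.lt_or_ge d₂ 4 with hd | hd
  · interval_cases d₂ <;> interval_cases a <;> omega
  · rintro ⟨c, hc⟩
    rw [← Nat.sub_add_cancel hd, pow_add] at hc
    have : a = 16 * (9 * (b - a) * 625 * 10 ^ (d₂ - 4) - 16 * c) := by linear_combination -hc
    omega

end IsAlmostRepdigit

end Digits

section Size

theorem mul_le_of_ten_pow_le {d m : ℕ} (h : (10 : ℝ) ^ d ≤ 2 ^ m) : 13 * d ≤ 4 * m := by
  have hpow : (10 : ℝ) ^ (d * 13) ≤ 10 ^ (4 * m) :=
    calc (10 : ℝ) ^ (d * 13) = (10 ^ d) ^ 13 := pow_mul _ _ _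
      _ ≤ (2 ^ m) ^ 13 := by gcongr
      _ = (2 ^ 13) ^ m := pow_right_comm _ _ _
      _ ≤ (10 ^ 4) ^ m := by gcongr; norm_num
      _ = 10 ^ (4 * m) := (pow_mul _ _ _).symm
  linarith [(pow_le_pow_iff_right₀ (by norm_num)).1 hpow]

theorem mul_le_of_pow_le_ten_pow {d m : ℕ} (h : (15 / 8 : ℝ) ^ m ≤ 10 ^ d) : 4 * m ≤ 15 * d := by
  have hpow : (10 : ℝ) ^ (4 * m) ≤ 10 ^ (d * 15) :=
    calc (10 : ℝ) ^ (4 * m) = (10 ^ 4) ^ m := pow_mul _ _ _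
      _ ≤ ((15 / 8) ^ 15) ^ m := by gcongr; norm_num
      _ = ((15 / 8) ^ m) ^ 15 := pow_right_comm _ _ _
      _ ≤ (10 ^ d) ^ 15 := by gcongr
      _ = 10 ^ (d * 15) := (pow_mul _ _ _).symm
  linarith [(pow_le_pow_iff_right₀ (by norm_num)).1 hpow]

namespace IsDominantRoot

variable {k n : ℕ} {α : ℝ}

theorem lucasL_le (hα : IsDominantRoot k α) (hk : 4 ≤ k) (hn : 1 ≤ n) :
    (lucasL k n : ℝ) ≤ 2 ^ (n + 2) := by
  rcases le_or_gt (lucasL k n : ℝ) 0 with hneg | hpos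
  · exact hneg.trans (by positivity)
  have hbinet := (abs_le.1 (hα.abs_lucasL_sub_le hk hn)).2
  have hlower := hα.lower
  have hone : (1 : ℝ) ≤ 2 ^ (n - 1) := one_le_pow₀ (by norm_num)
  have htwo : (2 : ℝ) ^ (n + 2) = 2 ^ (n - 1) * 8 := by
    rw [show (8 : ℝ) = 2 ^ 3 by norm_num, ← pow_add]
    congr 1
    omega
  have hnum : (2 * α - 1) * (α - 1) * α ^ (n - 1) ≤ 3 * 2 ^ (n - 1) := by
    gcongr
    · exact hα.num_le_three
    · exact hα.lt_two.le
  linarith [le_mul_of_one_le_left hpos.le (hα.one_le_den hk)]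

theorem pow_sub_four_le (hα : IsDominantRoot k α) (hk : 4 ≤ k) (hn : 1 ≤ n)
    (hL : 0 ≤ lucasL k n) : α ^ (n - 1) - 4 ≤ 2 * lucasL k n := by
  have hbinet := (abs_le.1 (hα.abs_lucasL_sub_le hk hn)).1
  have hlower := hα.lower
  have hLR : (0 : ℝ) ≤ lucasL k n := by exact_mod_cast hL
  have hpow : 0 ≤ α ^ (n - 1) := by positivity
  linarith [le_mul_of_one_le_left hpow hα.one_le_num,
    mul_le_mul_of_nonneg_right hα.den_le_two hLR]

end IsDominantRoot

namespace IsAlmostRepdigit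

variable {k n d₁ d₂ : ℕ} {a b : ℤ}

theorem thirteen_mul_le (h : IsAlmostRepdigit (lucasL k n) a b d₁ d₂) (hk : 5 ≤ k) (hn : 1 ≤ n) :
    13 * d₁ ≤ 4 * (n + 9) := by
  obtain ⟨α, hα⟩ := exists_isDominantRoot hk
  refine mul_le_of_ten_pow_le ?_
  have hle : (10 : ℝ) ^ d₁ ≤ 90 * lucasL k n + 10 := by exact_mod_cast h.ten_pow_le
  have hone : (1 : ℝ) ≤ 2 ^ (n + 2) := one_le_pow₀ (by norm_num)
  calc (10 : ℝ) ^ d₁ ≤ 2 ^ (n + 2) * 128 := by linarith [hα.lucasL_le (by omega) hn]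
    _ = 2 ^ (n + 9) := by ring

theorem four_mul_le (h : IsAlmostRepdigit (lucasL k n) a b d₁ d₂) (hk : 5 ≤ k) (hn : 1 ≤ n) :
    4 * (n - 1) ≤ 15 * (d₁ + 1) := by
  obtain ⟨α, hα⟩ := exists_isDominantRoot hk
  refine mul_le_of_pow_le_ten_pow ?_
  have hten : (1 : ℤ) ≤ 10 ^ d₁ := one_le_pow₀ (by norm_num)
  have hL : 0 ≤ lucasL k n := by linarith [h.ten_pow_le]
  have hlt : (lucasL k n : ℝ) < 10 ^ d₁ := by exact_mod_cast h.lt_ten_pow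
  have htenR : (1 : ℝ) ≤ 10 ^ d₁ := by exact_mod_cast hten
  have hlower : (15 / 8 : ℝ) ^ (n - 1) ≤ α ^ (n - 1) := by gcongr; exact hα.lower.le
  rw [pow_succ]
  linarith [hα.pow_sub_four_le (by omega) hn hL]

end IsAlmostRepdigit

end Size

section SixthRootScale

/-- The scale of the parameters in the range `k ≤ 200 * log₂ n`: here `T = k ^ 2 * w`, `ν = n - 1`
has `w` binary digits, and `z` is the integer sixth root of `ν`, which exceeds every fixed power
of `T` that occurs. -/
structure IsSixthRootScale (T w z ν : ℕ) : Prop where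
  le_T : 10 ^ 6 ≤ T
  w_le : w ≤ T
  le_z : 10 ^ 6 * T ^ 3 ≤ z
  pow_le : z ^ 6 ≤ ν
  le_pow : ν ≤ 2 * z ^ 6

set_option exponentiation.threshold 2000 in
theorem mul_pow_lt_two_pow {c w : ℕ} (hw : 968 ≤ w) (hc : c * 968 ^ 54 < 2 ^ 967) :
    c * w ^ 54 < 2 ^ (w - 1) := by
  induction w, hw using Nat.le_induction with
  | base => exact hc
  | succ w hw ih =>
    have hstep : 968 ^ 54 * (w + 1) ^ 54 ≤ 968 ^ 54 * (2 * w ^ 54) :=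
      calc 968 ^ 54 * (w + 1) ^ 54 = (968 * (w + 1)) ^ 54 := (mul_pow _ _ _).symm
        _ ≤ (969 * w) ^ 54 := Nat.pow_le_pow_left (by omega) 54
        _ = 969 ^ 54 * w ^ 54 := mul_pow _ _ _
        _ ≤ (968 ^ 54 * 2) * w ^ 54 := by gcongr; norm_num
        _ = 968 ^ 54 * (2 * w ^ 54) := mul_assoc _ _ _
    calc c * (w + 1) ^ 54 ≤ c * (2 * w ^ 54) :=
          Nat.mul_le_mul_left c (Nat.le_of_mul_le_mul_left hstep (by positivity))
      _ = 2 * (c * w ^ 54) := by ring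
      _ < 2 * 2 ^ (w - 1) := by gcongr
      _ = 2 ^ (w + 1 - 1) := by rw [← pow_succ']; congr 1; omega

set_option exponentiation.threshold 2000 in
theorem exists_isSixthRootScale {k w n : ℕ} (hk : 471 ≤ k) (hw : 968 ≤ w) (hkw : k ≤ 200 * w)
    (hn : 2 ^ (w - 1) ≤ n) : ∃ z, IsSixthRootScale (k ^ 2 * w) w z (n - 1) := by
  have hT : 10 ^ 6 ≤ k ^ 2 * w :=
    calc 10 ^ 6 ≤ 471 ^ 2 * 968 := by norm_num
      _ ≤ k ^ 2 * w := by gcongr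
  have hz : 10 ^ 6 * (k ^ 2 * w) ^ 3 ≤ Nat.nthRoot 6 (n - 1) := by
    rw [Nat.le_nthRoot_iff (by norm_num)]
    have hlt := mul_pow_lt_two_pow (c := (10 ^ 6 * 200 ^ 6) ^ 6) hw (by norm_num)
    calc (10 ^ 6 * (k ^ 2 * w) ^ 3) ^ 6 ≤ (10 ^ 6 * ((200 * w) ^ 2 * w) ^ 3) ^ 6 := by gcongr
      _ = (10 ^ 6 * 200 ^ 6) ^ 6 * w ^ 54 := by ring
      _ ≤ n - 1 := by omega
  have hz10 : 10 ≤ Nat.nthRoot 6 (n - 1) := by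
    have : k ^ 2 * w ≤ (k ^ 2 * w) ^ 3 := Nat.le_self_pow (by norm_num) _
    omega
  refine ⟨_, hT, Nat.le_mul_of_pos_left w (by positivity), hz,
    Nat.pow_nthRoot_le (Or.inl (by norm_num)), ?_⟩
  set z := Nat.nthRoot 6 (n - 1)
  have hlt : n - 1 < (z + 1) ^ 6 := Nat.lt_pow_nthRoot_add_one (by norm_num) _
  have hpow : 10 ^ 6 * (z + 1) ^ 6 ≤ 11 ^ 6 * z ^ 6 := by
    rw [← mul_pow, ← mul_pow]
    exact Nat.pow_le_pow_left (by omega) 6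
  omega

namespace IsSixthRootScale

variable {T w z ν : ℕ}

theorem one_le_T (h : IsSixthRootScale T w z ν) : 1 ≤ T := by linarith [h.le_T]

theorem mul_T_le (h : IsSixthRootScale T w z ν) : 10 ^ 6 * T ≤ z := by
  have : T ≤ T ^ 3 := Nat.le_self_pow (by norm_num) T
  linarith [h.le_z]

theorem one_le_z (h : IsSixthRootScale T w z ν) : 1 ≤ z := by linarith [h.one_le_T, h.mul_T_le]

theorem le_ν (h : IsSixthRootScale T w z ν) : 10 ^ 6 ≤ ν := by
  have hz : z ≤ z ^ 6 := Nat.le_self_pow (by norm_num) z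
  linarith [h.one_le_T, h.mul_T_le, h.pow_le]

theorem add_le_sq (h : IsSixthRootScale T w z ν) : w + 16 + 60 * T ≤ z ^ 2 := by
  have hsq : z ≤ z ^ 2 := Nat.le_self_pow (by norm_num) z
  linarith [h.le_T, h.w_le, h.mul_T_le]

theorem degree_sq_le (h : IsSixthRootScale T w z ν) :
    (4 * T * (3 + w + 13 + 6 * z ^ 2) + 1) * (2 * z ^ 2) ≤ ν := by
  have hsq := h.add_le_sq
  have hT := h.one_le_T
  calc (4 * T * (3 + w + 13 + 6 * z ^ 2) + 1) * (2 * z ^ 2)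
      ≤ (4 * T * (7 * z ^ 2) + T * z ^ 2) * (2 * z ^ 2) := by
        gcongr
        · omega
        · exact Nat.one_le_iff_ne_zero.2 (mul_ne_zero (by omega) (by omega))
    _ = 58 * T * (z ^ 2) ^ 2 := by ring
    _ ≤ z ^ 2 * (z ^ 2) ^ 2 := by gcongr; omega
    _ = z ^ 6 := by ring
    _ ≤ ν := h.pow_le

theorem cast_le_pow (h : IsSixthRootScale T w z ν) : (ν : ℝ) ≤ 2 * z ^ 6 := by
  exact_mod_cast h.le_pow

theorem exponent_sq_le (h : IsSixthRootScale T w z ν) :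
    49 * ((T : ℝ) ^ 2 * (2 * z ^ 2 * (3 + w + 13 + 6 * z ^ 2) + 6 * (ν / z ^ 2))) ≤
      1274 * ((T : ℝ) ^ 2 * z ^ 4) := by
  have hz : (0 : ℝ) < z := by exact_mod_cast h.one_le_z
  have hsq : (w : ℝ) + 16 + 60 * T ≤ z ^ 2 := by exact_mod_cast h.add_le_sq
  have hdiv : (ν : ℝ) / z ^ 2 ≤ 2 * z ^ 4 := by
    rw [div_le_iff₀ (by positivity)]
    linarith [h.cast_le_pow]
  calc 49 * ((T : ℝ) ^ 2 * (2 * z ^ 2 * (3 + w + 13 + 6 * z ^ 2) + 6 * (ν / z ^ 2)))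
      ≤ 49 * ((T : ℝ) ^ 2 * (2 * z ^ 2 * (7 * z ^ 2) + 6 * (2 * z ^ 4))) := by gcongr; linarith
    _ = 1274 * ((T : ℝ) ^ 2 * z ^ 4) := by ring

theorem div_mul_le (T z : ℕ) : z / (18 * T) * (18 * T) ≤ z := Nat.div_mul_le_self _ _

theorem mul_T_le_div (h : IsSixthRootScale T w z ν) : 24 * T ≤ z / (18 * T) := by
  have hT := h.one_le_T
  rw [Nat.le_div_iff_mul_le (by omega)]
  calc 24 * T * (18 * T) = 432 * T ^ 2 := by ring
    _ ≤ 10 ^ 6 * T ^ 3 := by gcongr <;> norm_num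
    _ ≤ z := h.le_z

theorem le_div_mul (h : IsSixthRootScale T w z ν) : z ≤ z / (18 * T) * (19 * T) := by
  have hT := h.one_le_T
  have hlt : z < (z / (18 * T) + 1) * (18 * T) :=
    Nat.lt_mul_of_div_lt (Nat.lt_succ_self _) (by omega)
  have hle : 18 * T ≤ z / (18 * T) * T := by
    gcongr
    linarith [h.mul_T_le_div]
  linarith

theorem height_div_le (h : IsSixthRootScale T w z ν) :
    1275 * (T ^ 2 * z ^ 4) + w + 13 + 6 * (z / (18 * T)) ≤ 1276 * (T ^ 2 * z ^ 4) := by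
  have hdiv : z / (18 * T) ≤ z := Nat.div_le_self _ _
  have hz : 10 * z ≤ T ^ 2 * z ^ 4 := by
    gcongr
    · exact le_trans (by linarith [h.le_T]) (Nat.le_self_pow two_ne_zero T)
    · exact Nat.le_self_pow (by norm_num) z
  linarith [h.le_T, h.w_le, h.mul_T_le]

theorem degree_div_le (h : IsSixthRootScale T w z ν) :
    (4 * T * (1275 * (T ^ 2 * z ^ 4) + w + 13 + 6 * (z / (18 * T))) + 1) * (2 * (z / (18 * T))) ≤
      ν := by
  have hT := h.one_le_T
  have hz := h.one_le_z
  calc (4 * T * (1275 * (T ^ 2 * z ^ 4) + w + 13 + 6 * (z / (18 * T))) + 1) *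
        (2 * (z / (18 * T)))
      ≤ (4 * T * (1276 * (T ^ 2 * z ^ 4)) + T ^ 3 * z ^ 4) * (2 * z) := by
        gcongr
        · exact h.height_div_le
        · exact Nat.one_le_iff_ne_zero.2 (by positivity)
        · exact Nat.div_le_self _ _
    _ = 10210 * T ^ 3 * z ^ 5 := by ring
    _ ≤ 10 ^ 6 * T ^ 3 * z ^ 5 := by gcongr; norm_num
    _ ≤ z * z ^ 5 := by gcongr; exact h.le_z
    _ = z ^ 6 := by ring
    _ ≤ ν := h.pow_le

theorem exponent_div_le (h : IsSixthRootScale T w z ν) :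
    49 * ((T : ℝ) ^ 2 * (2 * (z / (18 * T) : ℕ) * ((1275 * (T ^ 2 * z ^ 4) : ℕ) + w + 13 +
      6 * (z / (18 * T) : ℕ)) + 6 * (ν / (z / (18 * T) : ℕ)))) ≤ 18130 * (T ^ 3 * z ^ 5) := by
  have hQ : (0 : ℝ) < (z / (18 * T) : ℕ) := by
    exact_mod_cast lt_of_lt_of_le (by linarith [h.one_le_T]) h.mul_T_le_div
  have hdiv : (ν : ℝ) / (z / (18 * T) : ℕ) ≤ 38 * (T * z ^ 5) := by
    rw [div_le_iff₀ hQ]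
    have hz : (z : ℝ) ≤ (z / (18 * T) : ℕ) * (19 * T) := by exact_mod_cast h.le_div_mul
    calc (ν : ℝ) ≤ 2 * z ^ 5 * z := by linarith [h.cast_le_pow]
      _ ≤ 2 * z ^ 5 * ((z / (18 * T) : ℕ) * (19 * T)) := by gcongr
      _ = 38 * (T * z ^ 5) * (z / (18 * T) : ℕ) := by ring
  have hmain : 2 * ((z / (18 * T) : ℕ) : ℝ) * ((1275 * (T ^ 2 * z ^ 4) : ℕ) + w + 13 +
      6 * (z / (18 * T) : ℕ)) ≤ 142 * (T * z ^ 5) := by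
    have hmul : ((z / (18 * T) : ℕ) : ℝ) * (18 * T) ≤ z := by exact_mod_cast div_mul_le T z
    calc _ ≤ 2 * ((z / (18 * T) : ℕ) : ℝ) * (1276 * (T ^ 2 * z ^ 4)) := by
          gcongr
          exact_mod_cast h.height_div_le
      _ = (2 * 1276 / 18) * (T * z ^ 4) * ((z / (18 * T) : ℕ) * (18 * T)) := by ring
      _ ≤ 142 * (T * z ^ 4) * z := by gcongr; norm_num
      _ = 142 * (T * z ^ 5) := by ring
  calc _ ≤ 49 * ((T : ℝ) ^ 2 * (142 * (T * z ^ 5) + 6 * (38 * (T * z ^ 5)))) := by gcongr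
    _ = 18130 * (T ^ 3 * z ^ 5) := by ring

theorem seventeen_le (h : IsSixthRootScale T w z ν) : 17 ≤ (T : ℝ) ^ 2 * z ^ 4 := by
  have hT : (10 ^ 6 : ℝ) ≤ T := by exact_mod_cast h.le_T
  have hz : (1 : ℝ) ≤ z := by exact_mod_cast h.one_le_z
  calc (17 : ℝ) ≤ (10 ^ 6) ^ 2 * 1 ^ 4 := by norm_num
    _ ≤ T ^ 2 * z ^ 4 := by gcongr

theorem add_mul_lt (h : IsSixthRootScale T w z ν) :
    13 + 18130 * ((T : ℝ) ^ 3 * z ^ 5) < ν / 2 := by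
  have hT : (1 : ℝ) ≤ T := by exact_mod_cast h.one_le_T
  have hz : (1 : ℝ) ≤ z := by exact_mod_cast h.one_le_z
  have hTz : 10 ^ 6 * (T : ℝ) ^ 3 ≤ z := by exact_mod_cast h.le_z
  have hone : 1 ≤ (T : ℝ) ^ 3 * z ^ 5 :=
    one_le_mul_of_one_le_of_one_le (one_le_pow₀ hT) (one_le_pow₀ hz)
  have hν : 10 ^ 6 * ((T : ℝ) ^ 3 * z ^ 5) ≤ ν :=
    calc (10 ^ 6 : ℝ) * (T ^ 3 * z ^ 5) = 10 ^ 6 * T ^ 3 * z ^ 5 := (mul_assoc _ _ _).symm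
      _ ≤ (z : ℝ) * z ^ 5 := by gcongr
      _ = (z : ℝ) ^ 6 := by ring
      _ ≤ ν := by exact_mod_cast h.pow_le
  linarith

end IsSixthRootScale

end SixthRootScale

section LinearForms

theorem exists_eq_exp_mul_of_abs_sub_le {x y ε : ℝ} (hx : 0 < x) (hy : 0 < y) (hε : ε ≤ 1 / 2)
    (h : |x - y| ≤ ε * x) : ∃ Λ, x = Real.exp Λ * y ∧ |Λ| ≤ 2 * ε := by
  obtain ⟨hlow, hup⟩ := abs_le.1 h
  have hε0 : 0 ≤ ε := nonneg_of_mul_nonneg_left ((abs_nonneg _).trans h) hx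
  have hyx : y / x ≤ 1 + ε := by
    rw [div_le_iff₀ hx]
    linarith only [hlow]
  have hxy : x / y ≤ 1 + 2 * ε := by
    rw [div_le_iff₀ hy]
    nlinarith only [mul_nonneg hε0 hy.le, hup, hε, hε0]
  have hlog_yx := Real.log_le_sub_one_of_pos (div_pos hy hx)
  have hlog_xy := Real.log_le_sub_one_of_pos (div_pos hx hy)
  rw [Real.log_div hy.ne' hx.ne'] at hlog_yx
  refine ⟨Real.log (x / y), ?_, abs_le.2 ⟨?_, by linarith only [hlog_xy, hxy]⟩⟩
  · rw [Real.exp_log (by positivity), div_mul_cancel₀ _ hy.ne']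
  · rw [Real.log_div hx.ne' hy.ne']
    linarith only [hlog_yx, hyx, hε0]

theorem le_mul_exp_of_exp_neg_le {E c X : ℝ} (hX : 0 < X) (h : Real.exp (-E) ≤ c / X) :
    X ≤ c * Real.exp E := by
  rwa [le_div_iff₀ hX, Real.exp_neg, inv_mul_le_iff₀ (Real.exp_pos _), mul_comm] at h

theorem exp_div_two_le_pow {α : ℝ} (hα : 15 / 8 ≤ α) (m : ℕ) : Real.exp (m / 2) ≤ α ^ m := by
  have hbase : Real.exp (1 / 2) ≤ α := by
    refine le_of_sq_le_sq ?_ (by linarith)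
    rw [← Real.exp_nat_mul]
    norm_num
    nlinarith [Real.exp_one_lt_d9]
  calc Real.exp (m / 2) = Real.exp (1 / 2) ^ m := by rw [← Real.exp_nat_mul]; ring_nf
    _ ≤ α ^ m := by gcongr

theorem nine_le_exp_three : (9 : ℝ) ≤ Real.exp 3 := by
  rw [show (3 : ℝ) = (3 : ℕ) * 1 by norm_num, Real.exp_nat_mul]
  calc (9 : ℝ) ≤ 2.7 ^ 3 := by norm_num
    _ ≤ Real.exp 1 ^ 3 := by gcongr; linarith [Real.exp_one_gt_d9]

theorem IsDominantRoot.abs_add_mul_den_sub_le {k n : ℕ} {α : ℝ} (hα : IsDominantRoot k α)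
    (hk : 4 ≤ k) (hn : 1 ≤ n) (e : ℝ) :
    |(9 * lucasL k n + e) * ((k + 1) * α - 2 * k) - 9 * ((2 * α - 1) * (α - 1)) * α ^ (n - 1)| ≤
      36 + 2 * |e| := by
  set B := ((k : ℝ) + 1) * α - 2 * k
  have hB1 : 1 ≤ B := hα.one_le_den hk
  have hB2 : |B| ≤ 2 := abs_le.2 ⟨by linarith, hα.den_le_two⟩
  calc _ = |9 * (B * lucasL k n - (2 * α - 1) * (α - 1) * α ^ (n - 1)) + B * e| := by ring_nf
    _ ≤ 9 * |B * lucasL k n - (2 * α - 1) * (α - 1) * α ^ (n - 1)| + |B| * |e| := by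
        refine (abs_add_le _ _).trans_eq ?_
        rw [abs_mul, abs_mul, abs_of_pos (by norm_num : (0 : ℝ) < 9)]
    _ ≤ 9 * 4 + 2 * |e| := by
        gcongr
        exact hα.abs_lucasL_sub_le hk hn
    _ = 36 + 2 * |e| := by norm_num

namespace IsAlmostRepdigit

variable {k n d₁ d₂ w z : ℕ} {α : ℝ} {L a b : ℤ}

theorem abs_mul_den_mul_ten_pow_sub_le (h : IsAlmostRepdigit (lucasL k n) a b d₁ d₂)
    (hα : IsDominantRoot k α) (hk : 4 ≤ k) (hn : 1 ≤ n) :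
    |a * ((k + 1) * α - 2 * k) * 10 ^ d₁ - 9 * ((2 * α - 1) * (α - 1)) * α ^ (n - 1)| ≤
      216 * 10 ^ d₂ := by
  have heq : (9 : ℝ) * lucasL k n = a * 10 ^ d₁ + 9 * (b - a) * 10 ^ d₂ - a := by
    exact_mod_cast h.nine_mul
  have ha1 : (1 : ℝ) ≤ a := by exact_mod_cast h.one_le_a
  have ha9 : (a : ℝ) ≤ 9 := by exact_mod_cast h.a_le_nine
  have hb0 : (0 : ℝ) ≤ b := by exact_mod_cast h.b_nonneg
  have hb9 : (b : ℝ) ≤ 9 := by exact_mod_cast h.b_le_nine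
  have hone : (1 : ℝ) ≤ 10 ^ d₂ := one_le_pow₀ (by norm_num)
  have he : |(a : ℝ) - 9 * (b - a) * 10 ^ d₂| ≤ 9 + 81 * 10 ^ d₂ := by
    have hba : |(b : ℝ) - a| ≤ 9 := abs_le.2 ⟨by linarith, by linarith⟩
    calc |(a : ℝ) - 9 * (b - a) * 10 ^ d₂|
        ≤ |(a : ℝ)| + |9 * ((b : ℝ) - a) * 10 ^ d₂| := abs_sub _ _
      _ = a + 9 * |(b : ℝ) - a| * 10 ^ d₂ := by
          rw [abs_mul, abs_mul, abs_of_nonneg (by linarith : (0 : ℝ) ≤ a),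
            abs_of_pos (by norm_num : (0 : ℝ) < 9), abs_of_nonneg (by linarith : (0 : ℝ) ≤ 10 ^ d₂)]
      _ ≤ 9 + 9 * 9 * 10 ^ d₂ := by gcongr
      _ = 9 + 81 * 10 ^ d₂ := by norm_num
  have hmain := hα.abs_add_mul_den_sub_le hk hn (a - 9 * (b - a) * 10 ^ d₂)
  rw [heq] at hmain
  calc _ ≤ 36 + 2 * |(a : ℝ) - 9 * (b - a) * 10 ^ d₂| := by convert hmain using 2; ring
    _ ≤ 216 * 10 ^ d₂ := by linarith

theorem ten_pow_sub_le (h : IsAlmostRepdigit (lucasL k n) a b d₁ d₂) (hα : IsDominantRoot k α)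
    (hk : 471 ≤ k) (hw : 968 ≤ w) (hkw : k ≤ 200 * w) (hnw : n - 1 ≤ 2 ^ w)
    (hz : IsSixthRootScale (k ^ 2 * w) w z (n - 1)) :
    (10 : ℝ) ^ (d₁ - d₂) ≤ 1000 * Real.exp (1274 * ((k ^ 2 * w) ^ 2 * z ^ 4)) := by
  rcases le_or_gt ((10 : ℝ) ^ (d₁ - d₂)) 1000 with hsmall | hbig
  · exact hsmall.trans (le_mul_of_one_le_right (by norm_num) (Real.one_le_exp (by positivity)))
  have hn := hz.le_ν
  have hd : 13 * d₁ ≤ 4 * (n + 9) := h.thirteen_mul_le (by omega) (by omega)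
  have hT := hz.add_le_sq
  have ha1 := h.one_le_a
  have ha9 := h.a_le_nine
  have hB := hα.one_le_den (by omega)
  have hC := hα.one_le_num
  have hα0 : 0 < α := by linarith [hα.lower]
  have habs := h.abs_mul_den_mul_ten_pow_sub_le hα (by omega) (by omega)
  lift a to ℕ using by omega
  have ha1R : (1 : ℝ) ≤ a := by exact_mod_cast ha1
  have ha9R : (a : ℝ) ≤ 9 := by exact_mod_cast ha9
  have hε : 216 * (10 : ℝ) ^ d₂ ≤
      216 / 10 ^ (d₁ - d₂) * (a * ((k + 1) * α - 2 * k) * 10 ^ d₁) := by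
    rw [← Nat.add_sub_cancel' h.lt.le, pow_add, Nat.add_sub_cancel_left]
    calc 216 * (10 : ℝ) ^ d₂ = 216 / 10 ^ (d₁ - d₂) * (1 * (10 ^ d₂ * 10 ^ (d₁ - d₂))) := by
          field_simp
      _ ≤ _ := by gcongr; exact one_le_mul_of_one_le_of_one_le ha1R hB
  obtain ⟨Λ, hΛ, hΛle⟩ := exists_eq_exp_mul_of_abs_sub_le (by positivity) (by positivity)
    (by rw [div_le_iff₀ (by positivity)]; linarith) (habs.trans hε)
  have hΛ1 : |Λ| ≤ 1 := by
    refine hΛle.trans ?_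
    rw [← mul_div_assoc, div_le_one (by positivity)]
    linarith
  have hlower := hα.exp_neg_le_abs (M := a) (h := 3) hk (by omega)
    (ha9R.trans (mod_cast nine_le_exp_three)) hw hkw (by omega) hnw (by omega) (by omega)
    hz.degree_sq_le hΛ1 hΛ
  have hexp := hz.exponent_sq_le
  push_cast at hlower hexp
  have hX := le_mul_exp_of_exp_neg_le (c := 432) (by positivity)
    ((Real.exp_le_exp.2 (neg_le_neg hexp)).trans (hlower.trans (hΛle.trans_eq (by ring))))
  linarith [Real.exp_pos (1274 * (((k : ℝ) ^ 2 * w) ^ 2 * z ^ 4))]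

theorem leading_bounds (h : IsAlmostRepdigit L a b d₁ d₂) :
    1 ≤ a * 10 ^ (d₁ - d₂) + 9 * (b - a) ∧
      a * 10 ^ (d₁ - d₂) + 9 * (b - a) ≤ 81 * 10 ^ (d₁ - d₂) := by
  have hten : (10 : ℤ) ≤ 10 ^ (d₁ - d₂) := le_self_pow₀ (by norm_num) (by have := h.lt; omega)
  obtain ⟨-, ha1, ha9, hb0, hb9, -⟩ := h
  constructor <;> nlinarith

end IsAlmostRepdigit

namespace IsDominantRoot

variable {k n d w z M a : ℕ} {α : ℝ}

theorem exists_eq_exp_mul (hα : IsDominantRoot k α) (hk : 4 ≤ k) (hn : 108 ≤ n) (hM : 1 ≤ M)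
    (ha : a ≤ 9) (heq : 9 * lucasL k n = M * 10 ^ d - a) :
    ∃ Λ, M * ((k + 1) * α - 2 * k) * 10 ^ d =
      Real.exp Λ * (9 * ((2 * α - 1) * (α - 1)) * α ^ (n - 1)) ∧ |Λ| ≤ 14 / α ^ (n - 1) := by
  have hB := hα.one_le_den hk
  have hC := hα.one_le_num
  have hα0 : 0 < α := by linarith [hα.lower]
  have haR : |(a : ℝ)| ≤ 9 := by rw [Nat.abs_cast]; exact_mod_cast ha
  have heqR : (9 : ℝ) * lucasL k n + a = M * 10 ^ d := by
    exact_mod_cast (eq_sub_iff_add_eq.1 heq : 9 * lucasL k n + (a : ℤ) = M * 10 ^ d)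
  have hA : 54 ≤ α ^ (n - 1) := by
    have hn1 : (107 : ℝ) ≤ (n - 1 : ℕ) := by exact_mod_cast Nat.le_sub_one_of_lt hn
    linarith [exp_div_two_le_pow hα.lower.le (n - 1), Real.add_one_le_exp ((n - 1 : ℕ) / 2 : ℝ)]
  have habs := hα.abs_add_mul_den_sub_le hk (by omega : 1 ≤ n) a
  rw [heqR, mul_right_comm] at habs
  have hCA := le_mul_of_one_le_left (by positivity : 0 ≤ α ^ (n - 1)) hC
  have hε : 36 + 2 * |(a : ℝ)| ≤ 7 / α ^ (n - 1) * (M * ((k + 1) * α - 2 * k) * 10 ^ d) := by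
    rw [div_mul_eq_mul_div, le_div_iff₀ (by positivity)]
    nlinarith [(abs_le.1 habs).1]
  obtain ⟨Λ, hΛ, hΛle⟩ := exists_eq_exp_mul_of_abs_sub_le (by positivity) (by positivity)
    (by rw [div_le_iff₀ (by positivity)]; linarith) (habs.trans hε)
  exact ⟨Λ, hΛ, hΛle.trans_eq (by ring)⟩

theorem exp_lt_of_nine_mul_eq (hα : IsDominantRoot k α) (hk : 471 ≤ k) (hw : 968 ≤ w)
    (hkw : k ≤ 200 * w) (hnw : n - 1 ≤ 2 ^ w) (hz : IsSixthRootScale (k ^ 2 * w) w z (n - 1))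
    (hd : 3 * d ≤ n - 1) (hM : 1 ≤ M) (ha : a ≤ 9) (heq : 9 * lucasL k n = M * 10 ^ d - a) :
    Real.exp (1275 * ((k ^ 2 * w) ^ 2 * z ^ 4)) < M := by
  by_contra! hMh
  have hn := hz.le_ν
  obtain ⟨Λ, hΛ, hΛle⟩ := hα.exists_eq_exp_mul (by omega) (by omega : 108 ≤ n) hM ha heq
  have hα0 : 0 < α := by linarith [hα.lower]
  have hpow := exp_div_two_le_pow hα.lower.le (n - 1)
  have hnR : (10 ^ 6 : ℝ) ≤ (n - 1 : ℕ) := by exact_mod_cast hn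
  have hΛ1 : |Λ| ≤ 1 := by
    refine hΛle.trans ?_
    rw [div_le_one (by positivity)]
    linarith [Real.add_one_le_exp ((n - 1 : ℕ) / 2 : ℝ)]
  have hlower := hα.exp_neg_le_abs hk hM (hMh.trans_eq (mod_cast rfl)) hw hkw (by omega) hnw hd
    hz.mul_T_le_div hz.degree_div_le hΛ1 hΛ
  have hexp := hz.exponent_div_le
  push_cast at hlower hexp
  have hX := le_mul_exp_of_exp_neg_le (by positivity)
    ((Real.exp_le_exp.2 (neg_le_neg hexp)).trans (hlower.trans hΛle))
  have h14 : (14 : ℝ) ≤ Real.exp 13 := by linarith [Real.add_one_le_exp (13 : ℝ)]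
  have hle : Real.exp ((n - 1 : ℕ) / 2) ≤
      Real.exp (13 + 18130 * (((k : ℝ) ^ 2 * w) ^ 3 * z ^ 5)) := by
    rw [Real.exp_add]
    exact (hpow.trans hX).trans (by gcongr)
  have hlt := hz.add_mul_lt
  push_cast at hlt
  linarith [Real.exp_le_exp.1 hle]

end IsDominantRoot

/- Bounding the linear form through the leading block `a ⋯ a` of the number first shows that this
block is short; it then serves as the coefficient of a second linear form. -/
theorem not_isAlmostRepdigit_of_le {k n d₁ d₂ w : ℕ} {a b : ℤ} (hk : 471 ≤ k) (hw : 968 ≤ w)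
    (hkw : k ≤ 200 * w) (hn : 2 ^ (w - 1) ≤ n) (hnw : n < 2 ^ w) :
    ¬ IsAlmostRepdigit (lucasL k n) a b d₁ d₂ := by
  intro h
  obtain ⟨α, hα⟩ := exists_isDominantRoot (k := k) (by omega)
  obtain ⟨z, hz⟩ := exists_isSixthRootScale hk hw hkw hn
  have hn1 := hz.le_ν
  have hd : 13 * d₁ ≤ 4 * (n + 9) := h.thirteen_mul_le (by omega) (by omega)
  have hlt := h.lt
  have ha1 := h.one_le_a
  have ha9 := h.a_le_nine
  have hten := h.ten_pow_sub_le hα hk hw hkw (by omega) hz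
  obtain ⟨hM1, hM2⟩ := h.leading_bounds
  have heq : 9 * lucasL k n = (a * 10 ^ (d₁ - d₂) + 9 * (b - a)) * 10 ^ d₂ - a := by
    rw [h.nine_mul, ← Nat.add_sub_cancel' hlt.le, pow_add, Nat.add_sub_cancel_left]
    ring
  generalize a * 10 ^ (d₁ - d₂) + 9 * (b - a) = M at hM1 hM2 heq
  lift a to ℕ using by omega
  lift M to ℕ using by omega
  have hM := hα.exp_lt_of_nine_mul_eq hk hw hkw (by omega) hz (by omega) (by omega) (by omega) heq
  have hM2R : (M : ℝ) ≤ 81 * 10 ^ (d₁ - d₂) := by exact_mod_cast hM2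
  have hE := hz.seventeen_le
  push_cast at hE
  set E := ((k : ℝ) ^ 2 * w) ^ 2 * z ^ 4
  have hexp : 81000 * Real.exp (1274 * E) ≤ Real.exp (1275 * E) :=
    calc 81000 * Real.exp (1274 * E) ≤ Real.exp (17 : ℕ) * Real.exp (1274 * E) := by
          gcongr
          exact le_trans (by norm_num) (two_pow_le_exp 17)
      _ = Real.exp ((17 : ℕ) + 1274 * E) := (Real.exp_add _ _).symm
      _ ≤ Real.exp (1275 * E) := Real.exp_le_exp.2 (by push_cast; linarith)
  linarith
end LinearForms

section Blocks

/-- The coefficients of the `2`-adic expansion of the Lucas numbers (see `blockSum`). The rule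
`blockCoeff (m + 1) (t + 1) = blockCoeff (m + 1) t + blockCoeff m (t + 1)` is Pascal's, and the
boundary values are chosen such that `2 ^ m * blockCoeff m 0 = 4 * lucasL k m` for `m ≤ k`. -/
def blockCoeff : ℕ → ℕ → ℕ
  | 0, _ => 8
  | 1, 0 => 2
  | _ + 2, 0 => 3
  | m + 1, t + 1 => blockCoeff (m + 1) t + blockCoeff m (t + 1)

theorem blockCoeff_zero_left (t : ℕ) : blockCoeff 0 t = 8 := by
  rw [blockCoeff]

theorem blockCoeff_one_zero : blockCoeff 1 0 = 2 := by
  rw [blockCoeff]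

theorem blockCoeff_zero_right {m : ℕ} (hm : 2 ≤ m) : blockCoeff m 0 = 3 := by
  obtain ⟨j, rfl⟩ := Nat.exists_eq_add_of_le' hm
  rw [blockCoeff]

theorem blockCoeff_succ_succ (m t : ℕ) :
    blockCoeff (m + 1) (t + 1) = blockCoeff (m + 1) t + blockCoeff m (t + 1) := by
  conv_lhs => rw [blockCoeff]

theorem eight_le_blockCoeff_succ (m t : ℕ) : 8 ≤ blockCoeff m (t + 1) := by
  induction m with
  | zero => rw [blockCoeff_zero_left]
  | succ m ih => exact ih.trans (blockCoeff_succ_succ m t ▸ Nat.le_add_left _ _)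

theorem blockCoeff_le (m t : ℕ) : blockCoeff m t ≤ 8 * (t + 1) ^ m := by
  fun_induction blockCoeff m t with
  | case1 => simp
  | case2 => simp
  | case3 => simp
  | case4 m t ih₁ ih₂ =>
    calc blockCoeff (m + 1) t + blockCoeff m (t + 1)
        ≤ 8 * (t + 1) ^ (m + 1) + 8 * (t + 1 + 1) ^ m := add_le_add ih₁ ih₂
      _ ≤ 8 * ((t + 1 + 1) ^ m * (t + 1)) + 8 * (t + 1 + 1) ^ m := by
        rw [pow_succ]; gcongr; omega
      _ = 8 * (t + 1 + 1) ^ (m + 1) := by ring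

theorem blockCoeff_succ (m t : ℕ) :
    blockCoeff m (t + 1) =
      3 * (t + 1 + m).choose m + 4 * (t + m).choose m + (t + m - 1).choose m := by
  induction m generalizing t with
  | zero => simp [blockCoeff_zero_left]
  | succ m ihm =>
    rw [blockCoeff_succ_succ, ihm]
    induction t with
    | zero =>
      rcases m with - | m
      · simp [blockCoeff_one_zero]
      · simp only [zero_add, add_comm 1, blockCoeff_zero_right (Nat.le_add_left 2 m),
          Nat.choose_succ_self_right, Nat.choose_self, Nat.add_sub_cancel, Nat.choose_succ_self]
        ring
    | succ t iht =>
      have pascal (n : ℕ) : (n + 1).choose (m + 1) = n.choose m + n.choose (m + 1) :=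
        Nat.choose_succ_succ n m
      have h₁ := pascal (t + 1 + 1 + m)
      have h₂ := pascal (t + 1 + m)
      have h₃ := pascal (t + m)
      rw [blockCoeff_succ_succ, ihm]
      simp only [← add_assoc, Nat.add_sub_cancel, add_right_comm _ 1 m] at iht h₁ h₂ h₃ ⊢
      linarith

/-- The alternating sum
`2 ^ m * c m t - 2 ^ (m + (k + 1)) * c (m + (k + 1)) (t - 1) + ⋯` with `c = blockCoeff`. For `m ≤ k`
it is `4 * lucasL k ((k + 1) * t + m)` up to sign, by `four_mul_lucasL`. -/
def blockSum (k : ℕ) : ℕ → ℕ → ℤ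
  | 0, m => 2 ^ m * blockCoeff m 0
  | t + 1, m => 2 ^ m * blockCoeff m (t + 1) - blockSum k t (m + (k + 1))

variable {k : ℕ}

theorem blockSum_zero (k m : ℕ) : blockSum k 0 m = 2 ^ m * blockCoeff m 0 := rfl

theorem blockSum_succ (k t m : ℕ) :
    blockSum k (t + 1) m = 2 ^ m * blockCoeff m (t + 1) - blockSum k t (m + (k + 1)) := rfl

theorem two_pow_dvd_blockSum (k t m : ℕ) : (2 : ℤ) ^ m ∣ blockSum k t m := by
  induction t generalizing m with
  | zero => exact dvd_mul_right _ _
  | succ t ih => exact dvd_sub (dvd_mul_right _ _) ((pow_dvd_pow 2 (by omega)).trans (ih _))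

theorem blockSum_succ_succ (hk : 1 ≤ k) (t m : ℕ) :
    blockSum k (t + 1) (m + 1) = blockSum k t (m + 1) + 2 * blockSum k (t + 1) m := by
  induction t generalizing m with
  | zero =>
    simp only [blockSum_succ, blockSum_zero, blockCoeff_succ_succ,
      blockCoeff_zero_right (show 2 ≤ m + 1 + (k + 1) by omega),
      blockCoeff_zero_right (show 2 ≤ m + (k + 1) by omega)]
    push_cast
    ring
  | succ t ih =>
    have h := ih (m + (k + 1))
    rw [blockSum_succ k (t + 1), blockSum_succ k t (m + 1), blockSum_succ k (t + 1) m,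
      blockCoeff_succ_succ, add_right_comm m 1, h]
    push_cast
    ring

theorem blockSum_succ_zero (hk : 2 ≤ k) (t : ℕ) :
    blockSum k (t + 1) 0 = blockSum k t 0 - 2 * blockSum k t k := by
  have hfirst (t : ℕ) : blockSum k (t + 1) 0 = 8 - blockSum k t (k + 1) := by
    simp [blockSum_succ, blockCoeff_zero_left]
  rw [hfirst]
  cases t with
  | zero =>
    simp only [blockSum_zero, blockCoeff_zero_left, blockCoeff_zero_right hk,
      blockCoeff_zero_right (Nat.le_succ_of_le hk)]
    ring
  | succ t => linarith [blockSum_succ_succ (one_le_two.trans hk) t k, hfirst t]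

theorem four_mul_lucasL_of_le (hk : 2 ≤ k) {r : ℕ} (hr : r ≤ k) :
    4 * lucasL k r = blockSum k 0 r := by
  rw [blockSum_zero]
  match r with
  | 0 => simp [lucasL_zero, blockCoeff_zero_left]
  | 1 => simp [lucasL_one hk, blockCoeff_one_zero]
  | j + 2 =>
    rw [blockCoeff_zero_right (Nat.le_add_left 2 j)]
    induction j with
    | zero => simp [lucasL_two hk]
    | succ j ih =>
      rw [show j + 1 + 2 = j + 2 + 1 by ring, lucasL_succ_of_lt (by omega) (by omega), pow_succ]
      linarith [ih (by omega)]

theorem four_mul_lucasL (hk : 2 ≤ k) (t : ℕ) {r : ℕ} (hr : r ≤ k) :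
    4 * lucasL k ((k + 1) * t + r) = (-1) ^ t * blockSum k t r := by
  induction t generalizing r with
  | zero => simpa using four_mul_lucasL_of_le hk hr
  | succ t iht =>
    have hrec (r : ℕ) : lucasL k ((k + 1) * (t + 1) + r) =
        2 * lucasL k ((k + 1) * t + r + k) - lucasL k ((k + 1) * t + r) := by
      rw [← lucasL_add_succ hk]
      ring_nf
    induction r with
    | zero =>
      have hlast := iht le_rfl
      have hfirst := iht (Nat.zero_le k)
      rw [hrec, blockSum_succ_zero hk, pow_succ]
      rw [add_zero] at hfirst ⊢
      linear_combination 2 * hlast - hfirst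
    | succ r ihr =>
      have hprev := ihr (Nat.le_of_succ_le hr)
      rw [show (k + 1) * (t + 1) + r = (k + 1) * t + (r + 1) + k by ring] at hprev
      rw [hrec, blockSum_succ_succ (one_le_two.trans hk), pow_succ]
      rw [pow_succ] at hprev
      linear_combination 2 * hprev - iht hr

end Blocks

section TwoAdic

theorem blockCoeff_succ_mul {m t N : ℕ} (hN : t + m = N + 1) :
    blockCoeff m (t + 1) * ((N + 2) * (N + 1)) = (N + 2).choose m *
      (3 * ((N + 2) * (N + 1)) + 4 * ((t + 1) * (N + 1)) + (t + 1) * t) := by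
  have htop : (N + 1).choose m * (N + 2) = (N + 2).choose m * (t + 1) := by
    have := Nat.choose_mul_succ_eq (N + 1) m
    rwa [show N + 1 + 1 - m = t + 1 by omega] at this
  have hmid : N.choose m * (N + 1) = (N + 1).choose m * t := by
    have := Nat.choose_mul_succ_eq N m
    rwa [show N + 1 - m = t by omega] at this
  rw [blockCoeff_succ, show t + 1 + m = N + 2 by omega, hN, Nat.add_sub_cancel]
  zify at htop hmid ⊢
  linear_combination (4 * ((N : ℤ) + 1) + t) * htop + (N + 2) * hmid

theorem not_two_pow_dvd_blockCoeff {m t w : ℕ} (hm : 1 ≤ m) (hw : t + 1 + m < 2 ^ w) :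
    ¬ 2 ^ (3 * w + 3) ∣ blockCoeff m (t + 1) := by
  intro h
  obtain ⟨N, hN⟩ := Nat.exists_eq_add_of_le' (show 1 ≤ t + m by omega)
  have hdvd := h.mul_right ((N + 2) * (N + 1))
  rw [blockCoeff_succ_mul hN] at hdvd
  have hcofactor : 3 * ((N + 2) * (N + 1)) + 4 * ((t + 1) * (N + 1)) + (t + 1) * t ≤
      3 * ((N + 2) * (N + 2)) + 4 * ((N + 2) * (N + 2)) + (N + 2) * (N + 2) := by
    gcongr <;> omega
  have hX : 3 * ((N + 2) * (N + 1)) + 4 * ((t + 1) * (N + 1)) + (t + 1) * t ≠ 0 := by positivity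
  generalize 3 * ((N + 2) * (N + 1)) + 4 * ((t + 1) * (N + 1)) + (t + 1) * t = X at *
  have hchoose : (N + 2).choose m ≠ 0 := (Nat.choose_pos (by omega)).ne'
  rw [Nat.prime_two.pow_dvd_iff_le_factorization (mul_ne_zero hchoose hX),
    Nat.factorization_mul hchoose hX, Finsupp.add_apply] at hdvd
  have hlog : ((N + 2).choose m).factorization 2 ≤ Nat.log 2 (N + 2) :=
    Nat.factorization_choose_le_log
  have hlogw : Nat.log 2 (N + 2) < w := Nat.log_lt_of_lt_pow (by omega) (by omega)
  have hXw : X < 2 ^ (2 * w + 3) :=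
    calc X ≤ 8 * ((N + 2) * (N + 2)) := by linarith
      _ < 8 * (2 ^ w * 2 ^ w) := by gcongr <;> omega
      _ = 2 ^ (2 * w + 3) := by ring
  have hXfac : X.factorization 2 < 2 * w + 3 :=
    (Nat.pow_lt_pow_iff_right one_lt_two).1 ((Nat.ordProj_le 2 hX).trans_lt hXw)
  omega

theorem two_pow_le_abs_of_dvd {m d : ℕ} {x y : ℤ} (hx : x ≠ 0) (hxm : |x| < 2 ^ m)
    (hdvd : 2 ^ m ∣ x - y * 10 ^ d) : 2 ^ d ≤ |x| := by
  by_contra! hxd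
  have hlt : |x| < 2 ^ min m d := by
    rcases min_choice m d with h | h <;> rwa [h]
  have hten : (2 : ℤ) ^ min m d ∣ y * 10 ^ d :=
    ((pow_dvd_pow 2 (min_le_right m d)).trans (pow_dvd_pow_of_dvd (by norm_num) d)).mul_left y
  refine hx (Int.eq_zero_of_abs_lt_dvd ?_ hlt)
  exact (dvd_sub_left hten).1 ((pow_dvd_pow 2 (min_le_left m d)).trans hdvd)

theorem le_add_five_of_two_pow_dvd {N d : ℕ} {a : ℤ} (ha₁ : 1 ≤ a) (ha₉ : a ≤ 9)
    (h : 2 ^ N ∣ 4 * a * 10 ^ d) : N ≤ d + 5 := by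
  by_contra! hN
  have hdvd : (2 : ℤ) ^ (d + 2) * 2 ^ 4 ∣ 2 ^ (d + 2) * (a * 5 ^ d) := by
    have hpow : 2 ^ (d + 2) * (a * 5 ^ d) = 4 * a * 10 ^ d := by
      rw [show (10 : ℤ) = 2 * 5 by norm_num, mul_pow]
      ring
    rw [hpow, ← pow_add]
    exact (pow_dvd_pow (2 : ℤ) (show d + 2 + 4 ≤ N by omega)).trans h
  have hcop : IsCoprime ((2 : ℤ) ^ 4) (5 ^ d) := IsCoprime.pow (by norm_num)
  have := Int.le_of_dvd (by omega)
    (hcop.dvd_of_dvd_mul_right ((mul_dvd_mul_iff_left (by positivity)).1 hdvd))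
  norm_num at this
  omega

namespace IsAlmostRepdigit

variable {L a b : ℤ} {d₁ d₂ : ℕ}

theorem not_256_dvd_of_le (h : IsAlmostRepdigit L a b d₁ d₂) (hd : 8 ≤ d₁) : ¬ 256 ∣ L := by
  intro hL
  refine h.not_256_dvd ?_
  rw [show 9 * (b - a) * 10 ^ d₂ - a = 9 * L - a * 10 ^ d₁ by linear_combination -h.nine_mul]
  exact dvd_sub (hL.mul_left _)
    ((dvd_trans (by norm_num) (pow_dvd_pow (10 : ℤ) hd)).mul_left _)

-- If `P` is small, then `d₂` is small because `2 ^ d₂` divides `9 * P + 4 * a ≠ 0`; hence all of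
-- the digits below `10 ^ d₁` are accounted for by `P`.
theorem nine_mul_sub_eq {P : ℤ} {m : ℕ} (h : IsAlmostRepdigit L a b d₁ d₂) (hP : 4 < |P|)
    (hm : m ≤ d₁) (hPm : 325 * (9 * |P| + 36) ^ 4 < 2 ^ m) (hdvd : 2 ^ m ∣ 4 * L - P) :
    9 * (4 * L - P) = 4 * a * 10 ^ d₁ := by
  have ha₁ := h.one_le_a
  have ha₉ := h.a_le_nine
  have hb₀ := h.b_nonneg
  have hb₉ := h.b_le_nine
  have hlow : (2 : ℤ) ^ m ∣ 9 * P + 4 * a - 36 * (b - a) * 10 ^ d₂ := by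
    rw [show 9 * P + 4 * a - 36 * (b - a) * 10 ^ d₂ = 4 * a * 10 ^ d₁ - 9 * (4 * L - P) by
      linear_combination 4 * h.nine_mul]
    exact dvd_sub
      (((pow_dvd_pow 2 hm).trans (pow_dvd_pow_of_dvd (by norm_num) d₁)).mul_left _)
      (hdvd.mul_left _)
  have hne : 9 * P + 4 * a ≠ 0 := by
    rcases abs_cases P with ⟨hP', -⟩ | ⟨hP', -⟩ <;> omega
  have hle : |9 * P + 4 * a| ≤ 9 * |P| + 36 := by
    rcases abs_cases P with ⟨hP', -⟩ | ⟨hP', -⟩ <;> rw [abs_le] <;> omega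
  have hone : 1 ≤ 9 * |P| + 36 := by omega
  set Y := 9 * |P| + 36
  have hY : Y ≤ Y ^ 4 := le_self_pow₀ hone (by norm_num)
  have htwo : (2 : ℤ) ^ d₂ ≤ Y := (two_pow_le_abs_of_dvd hne (by linarith) hlow).trans hle
  have hten : (10 : ℤ) ^ d₂ ≤ Y ^ 4 :=
    calc (10 : ℤ) ^ d₂ ≤ (2 ^ 4) ^ d₂ := by gcongr; norm_num
      _ = (2 ^ d₂) ^ 4 := pow_right_comm _ _ _
      _ ≤ Y ^ 4 := by gcongr
  have hdigit : |36 * (b - a) * 10 ^ d₂| ≤ 324 * Y ^ 4 := by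
    rw [abs_mul, abs_of_nonneg (show (0 : ℤ) ≤ 10 ^ d₂ by positivity)]
    gcongr
    rw [abs_le]
    omega
  have hzero := Int.eq_zero_of_abs_lt_dvd hlow ((abs_sub _ _).trans_lt (by linarith))
  linear_combination 4 * h.nine_mul - hzero

end IsAlmostRepdigit

end TwoAdic

section LargeOrder

variable {k r t w : ℕ}

/-- The first term of the `2`-adic expansion of `4 * lucasL k ((k + 1) * t + r)`. -/
def leadingTerm (r t : ℕ) : ℤ := (-1) ^ t * (2 ^ r * blockCoeff r t)

theorem abs_leadingTerm (r t : ℕ) : |leadingTerm r t| = 2 ^ r * blockCoeff r t := by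
  simp [leadingTerm, abs_mul]

theorem four_lt_abs_leadingTerm (r t : ℕ) : 4 < |leadingTerm r (t + 1)| := by
  have hcoeff : (8 : ℤ) ≤ blockCoeff r (t + 1) := mod_cast eight_le_blockCoeff_succ r t
  rw [abs_leadingTerm]
  exact (by norm_num : (4 : ℤ) < 1 * 8).trans_le
    (mul_le_mul (one_le_pow₀ one_le_two) hcoeff (by norm_num) (by positivity))

theorem mul_abs_leadingTerm_add_pow_lt (hr : r ≤ 9) (ht : t + 1 ≤ 2 ^ w) (hw : 8 ≤ w)
    (hkw : 200 * w ≤ k) : 325 * (9 * |leadingTerm r t| + 36) ^ 4 < 2 ^ (k / 4) := by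
  have hle : |leadingTerm r t| ≤ 2 ^ (9 * w + 12) :=
    calc |leadingTerm r t| = 2 ^ r * blockCoeff r t := abs_leadingTerm r t
      _ ≤ 2 ^ 9 * (8 * (t + 1) ^ 9) := by
        gcongr
        · norm_num
        · exact_mod_cast (blockCoeff_le r t).trans (by gcongr; omega)
      _ ≤ 2 ^ 9 * (8 * (2 ^ w) ^ 9) := by
        gcongr
        exact_mod_cast ht
      _ = 2 ^ (9 * w + 12) := by ring
  have hone : (1 : ℤ) ≤ 2 ^ (9 * w + 12) := one_le_pow₀ one_le_two
  calc 325 * (9 * |leadingTerm r t| + 36) ^ 4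
      ≤ 325 * (9 * 2 ^ (9 * w + 12) + 36 * 2 ^ (9 * w + 12)) ^ 4 := by
        gcongr
        linarith
    _ = 325 * 45 ^ 4 * 2 ^ (36 * w + 48) := by ring
    _ < 2 ^ 31 * 2 ^ (36 * w + 48) := by
        gcongr
        norm_num
    _ ≤ 2 ^ (k / 4) := by
        rw [← pow_add]
        exact pow_le_pow_right₀ one_le_two (by omega)

theorem two_pow_dvd_four_mul_lucasL (hk : 2 ≤ k) (t : ℕ) (hr : r ≤ k) :
    (2 : ℤ) ^ r ∣ 4 * lucasL k ((k + 1) * t + r) := by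
  rw [four_mul_lucasL hk t hr]
  exact (two_pow_dvd_blockSum k t r).mul_left _

theorem four_mul_lucasL_sub_leadingTerm (hk : 2 ≤ k) (t : ℕ) (hr : r ≤ k) :
    4 * lucasL k ((k + 1) * (t + 1) + r) - leadingTerm r (t + 1) =
      (-1) ^ t * blockSum k t (r + (k + 1)) := by
  rw [four_mul_lucasL hk _ hr, blockSum_succ, leadingTerm, pow_succ]
  ring

theorem two_pow_dvd_four_mul_lucasL_sub_leadingTerm (hk : 2 ≤ k) (t : ℕ) (hr : r ≤ k) :
    2 ^ (k + 1) ∣ 4 * lucasL k ((k + 1) * (t + 1) + r) - leadingTerm r (t + 1) := by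
  rw [four_mul_lucasL_sub_leadingTerm hk t hr]
  exact ((pow_dvd_pow 2 (Nat.le_add_left _ _)).trans (two_pow_dvd_blockSum k t _)).mul_left _

theorem not_two_pow_dvd_four_mul_lucasL_sub_leadingTerm (hk : 3 * w + 2 ≤ k)
    (hr : r ≤ k) (hw : t + 1 + (r + (k + 1)) < 2 ^ w) :
    ¬ 2 ^ (r + (k + 1) + (3 * w + 3)) ∣
      4 * lucasL k ((k + 1) * (t + 2) + r) - leadingTerm r (t + 2) := by
  have hunit : IsUnit ((-1 : ℤ) ^ (t + 1)) := isUnit_one.neg.pow _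
  have htail : 2 ^ (r + (k + 1) + (3 * w + 3)) ∣ blockSum k t (r + (k + 1) + (k + 1)) :=
    (pow_dvd_pow 2 (by omega)).trans (two_pow_dvd_blockSum k t _)
  rw [four_mul_lucasL_sub_leadingTerm (by omega) _ hr, hunit.dvd_mul_left, blockSum_succ,
    dvd_sub_left htail, pow_add, mul_dvd_mul_iff_left (by positivity)]
  exact_mod_cast not_two_pow_dvd_blockCoeff (Nat.succ_le_of_lt (by omega)) hw

namespace IsAlmostRepdigit

variable {a b : ℤ} {d₁ d₂ : ℕ}

theorem residue_le_nine (h : IsAlmostRepdigit (lucasL k ((k + 1) * t + r)) a b d₁ d₂)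
    (hk : 2 ≤ k) (hr : r ≤ k) (hd : 8 ≤ d₁) : r ≤ 9 := by
  by_contra! hr₉
  refine h.not_256_dvd_of_le hd ((mul_dvd_mul_iff_left (show (4 : ℤ) ≠ 0 by norm_num)).1 ?_)
  exact dvd_trans (by norm_num) ((pow_dvd_pow (2 : ℤ) (show 10 ≤ r from hr₉)).trans
    (two_pow_dvd_four_mul_lucasL hk t hr))

end IsAlmostRepdigit

theorem two_pow_dvd_of_nine_mul_eq {d : ℕ} {x a : ℤ} (hx : 9 * x = 4 * a * 10 ^ d) :
    2 ^ (d + 2) ∣ x := by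
  have hcop : IsCoprime ((2 : ℤ) ^ (d + 2)) 9 := IsCoprime.pow_left (by norm_num)
  refine hcop.dvd_of_dvd_mul_left ⟨a * 5 ^ d, ?_⟩
  rw [hx, show (10 : ℤ) = 2 * 5 by norm_num, mul_pow]
  ring

theorem not_isAlmostRepdigit_of_mul_le {n d₁ d₂ : ℕ} {a b : ℤ} (hw : 8 ≤ w)
    (hkw : 200 * w ≤ k) (hkn : k + 1 ≤ n) (hnw : n < 2 ^ w) :
    ¬ IsAlmostRepdigit (lucasL k n) a b d₁ d₂ := by
  intro h
  have hupper := h.four_mul_le (by omega) (by omega)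
  have hlower := h.thirteen_mul_le (by omega) (by omega)
  obtain ⟨t, ht⟩ := Nat.exists_eq_add_of_le' (Nat.div_pos hkn k.succ_pos)
  obtain ⟨r, hr, rfl⟩ : ∃ r ≤ k, n = (k + 1) * (t + 1) + r :=
    ⟨n % (k + 1), Nat.lt_succ_iff.1 (Nat.mod_lt n k.succ_pos),
      by rw [← zero_add 1, ← ht, Nat.div_add_mod]⟩
  have hr₉ := h.residue_le_nine (by omega) hr (by omega)
  have hdvd := two_pow_dvd_four_mul_lucasL_sub_leadingTerm (by omega) t hr
  have hlow := h.nine_mul_sub_eq (m := k / 4) (four_lt_abs_leadingTerm r t) (by omega)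
    (mul_abs_leadingTerm_add_pow_lt hr₉ (by nlinarith) hw hkw)
    ((pow_dvd_pow 2 (by omega)).trans hdvd)
  have hkd := le_add_five_of_two_pow_dvd h.one_le_a h.a_le_nine (hlow ▸ hdvd.mul_left 9)
  have ht₃ : 3 ≤ t := by
    by_contra! hlt
    have : (k + 1) * (t + 1) ≤ (k + 1) * 3 := Nat.mul_le_mul_left _ (by omega)
    omega
  obtain ⟨s, rfl⟩ := Nat.exists_eq_add_of_le' (one_le_two.trans (Nat.le_of_succ_le ht₃))
  have hds : d₁ + 2 < r + (k + 1) + (3 * w + 3) := by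
    by_contra! hle
    exact not_two_pow_dvd_four_mul_lucasL_sub_leadingTerm (by omega) hr (by nlinarith)
      ((pow_dvd_pow 2 hle).trans (two_pow_dvd_of_nine_mul_eq hlow))
  have : (k + 1) * 4 ≤ (k + 1) * (s + 1 + 1) := Nat.mul_le_mul_left _ (by omega)
  omega

end LargeOrder

namespace IsAlmostRepdigit

variable {k n d₁ d₂ : ℕ} {a b : ℤ}

set_option exponentiation.threshold 1000 in
theorem index_lt_two_pow (h : IsAlmostRepdigit (lucasL k n) a b d₁ d₂) (hk : 471 ≤ k)
    (hkn : k + 1 ≤ n) : n < 2 ^ 967 := by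
  by_contra! hn
  have hlog : 967 ≤ Nat.log 2 n := Nat.le_log_of_pow_le one_lt_two hn
  have hw : 968 ≤ Nat.log 2 n + 1 := Nat.succ_le_succ hlog
  have hnw : n < 2 ^ (Nat.log 2 n + 1) := Nat.lt_pow_succ_log_self one_lt_two n
  rcases le_total (200 * (Nat.log 2 n + 1)) k with hkw | hkw
  · exact not_isAlmostRepdigit_of_mul_le (le_trans (by norm_num) hw) hkw hkn hnw h
  · exact not_isAlmostRepdigit_of_le hk hw hkw (Nat.pow_log_le_self 2 (Nat.ne_zero_of_lt hkn)) hnw h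

theorem order_lt (h : IsAlmostRepdigit (lucasL k n) a b d₁ d₂) (hk : 471 ≤ k)
    (hkn : k + 1 ≤ n) : k < 200 * 967 := by
  by_contra! hkw
  exact not_isAlmostRepdigit_of_mul_le (by norm_num) hkw hkn (h.index_lt_two_pow hk hkn) h

end IsAlmostRepdigit

set_option exponentiation.threshold 1000 in
theorem two_pow_967_lt : (2 : ℝ) ^ 967 < 1.8 * 10 ^ 291 := by norm_num

/-- For `k > 470`, any solution of the almost repdigit equation satisfies
`k < 3·10^{31}` and `n < 1.8·10^{291}`. -/
theorem k_and_n_absolute_bounds (k n : ℕ) (hk : 470 < k) (hnk : k + 1 ≤ n)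
    (d1 d2 : ℕ) (a b : ℤ) (hd : d2 < d1) (hd1 : 3 ≤ d1)
    (ha1 : 1 ≤ a) (ha9 : a ≤ 9) (hb0 : 0 ≤ b) (hb9 : b ≤ 9)
    (heq : lucasL k n = a * ((10 ^ d1 - 1) / 9) + (b - a) * 10 ^ d2) :
    (k : ℝ) < 3 * 10 ^ 31 ∧ (n : ℝ) < 1.8 * 10 ^ 291 := by
  have h : IsAlmostRepdigit (lucasL k n) a b d1 d2 := ⟨hd, ha1, ha9, hb0, hb9, heq⟩
  have hn : (n : ℝ) < 2 ^ 967 := mod_cast h.index_lt_two_pow hk hnk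
  have hk' : (k : ℝ) < 200 * 967 := mod_cast h.order_lt hk hnk
  exact ⟨hk'.trans (by norm_num), hn.trans two_pow_967_lt⟩
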